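/- Let (W,S) be a Coxeter system with S = {s_1,…,s_n}, n ≥ 3, such that s_n commutes with s_i for all i ≤ n−2, s_{n−1} commutes with s_i for all i ≤ n−3, s_n s_{n−1} s_n = s_{n−1} s_n s_{n−1}, and s_{n−1} s_{n−2} s_{n−1} = s_{n−2} s_{n−1} s_{n−2}. Then for all l ≥ 3 and a ≥ 1: f(W_n,l,a) = f(W_{n−1},l,a) + f(W_{n−1},l−2,a) + f(W_{n−2},l−1,a−1) − f(W_{n−2},l−2,a) + f(W_{n−2},l−3,a−1) − f(W_{n−3},l−3,a−1). -/

import Mathlib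

/-!
Call an involution *without repeated letters* (`NoRepeat`) if it arises from `1` by twisted
conjugations, `v ↦ v sᵢ` if `sᵢ` commutes with `v` and `v ↦ sᵢ v sᵢ` otherwise, in which every letter
`i` is new, that is, does not occur in `v`. These are exactly the Boolean involutions
(`genBoolean_iff`). Below such an involution `w`, the involutions correspond to the subsets of the
support of `w`, and the Bruhat order becomes inclusion (`NoRepeat.le_of_supp_subset`,
`NoRepeat.exists_supp_eq`). Conversely, in a Boolean interval the involutions are determined by their
supports; this forces `w`, if not `1`, to come from a smaller involution by a new letter
(`noRepeat_of_supp_injective`).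
The length and Bruhat order of a standard parabolic subgroup are the restrictions of those of `W`;
for the Bruhat order this is an application of strong exchange (`glen_eq`, `genBruhatLE_iff`).

For an involution without repeated letters, length and absolute length are easy to follow along the
twisted conjugations. The letter adds `1` to the length if it commutes with `v` and `2` otherwise
(`length_conj`). The absolute length is the rank of `ρ(w) - 1` for the geometric representation `ρ`
(`alen_eq`): that rank is at most the number of factors in any product of reflections, it is
invariant under conjugation, and a new commuting letter raises it by one, since such a letter
commutes with each letter of `v` (`commute_letters`) and `ρ(v)` therefore fixes its root.

For the recursion, put `i = n`, `j = n - 1`, `k = n - 2` and let `J` be the remaining letters. An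
involution without repeated letters that involves `i` has one of three shapes (`Tail.shapes`):
`v sᵢ` with letters of `v` in `J ∪ {k}`; `sᵢ v sᵢ` with letters of `v` in `J ∪ {k, j}`, including
`j`; or `sⱼ x sᵢ sⱼ` with letters of `x` in `J ∪ {k}`, including `k`. If `k` is not a letter of `x`,
the braid relation `sᵢ sⱼ sᵢ = sⱼ sᵢ sⱼ` turns the third shape into the second. The three shapes
exclude each other (`Tail.second_ne_third`), and counting them gives the six terms
(`Tail.ncard_NRSet`).
-/

/-- The length of `g` with respect to a generating set `Gen`:
the minimal length of a word in elements of `Gen` whose product is `g`. -/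
noncomputable def glen {G : Type*} [Group G] (Gen : Set G) (g : G) : ℕ :=
  sInf {k : ℕ | ∃ l : List G, (∀ t ∈ l, t ∈ Gen) ∧ l.length = k ∧ l.prod = g}

/-- `t` is a reflection with respect to the generating set `Gen`:
a conjugate `x s x⁻¹` of a generator `s ∈ Gen` by an element `x` of the group
generated by `Gen`. -/
def IsGenReflection {G : Type*} [Group G] (Gen : Set G) (t : G) : Prop :=
  ∃ x ∈ Subgroup.closure Gen, ∃ s ∈ Gen, t = x * s * x⁻¹

/-- The Bruhat order with respect to the generating set `Gen`: `u ≤ w` iff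
`w = u t₁ ⋯ tₘ` for reflections `t₁, …, tₘ` such that the length strictly
increases along the partial products `u t₁ ⋯ tᵢ`. -/
def genBruhatLE {G : Type*} [Group G] (Gen : Set G) (u w : G) : Prop :=
  ∃ ts : List G, (∀ t ∈ ts, IsGenReflection Gen t) ∧
    w = ts.foldl (· * ·) u ∧
    ∀ k, k + 1 ≤ ts.length →
      glen Gen ((ts.take k).foldl (· * ·) u) < glen Gen ((ts.take (k + 1)).foldl (· * ·) u)

/-- An involution `w` of the group generated by `Gen` is Boolean if the principal
order ideal of `w` in the Bruhat order on involutions is isomorphic, as a poset,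
to the Boolean lattice of all subsets of some finite set. -/
def genBoolean {G : Type*} [Group G] (Gen : Set G) (w : G) : Prop :=
  ∃ (m : ℕ)
    (f : {u : G // u ∈ Subgroup.closure Gen ∧ u * u = 1 ∧ genBruhatLE Gen u w} ≃ Finset (Fin m)),
    ∀ a b, genBruhatLE Gen a.1 b.1 ↔ f a ⊆ f b

/-- The absolute length of `g` with respect to the generating set `Gen`:
the minimal number of reflections whose product is `g`. -/
noncomputable def alen {G : Type*} [Group G] (Gen : Set G) (g : G) : ℕ :=
  sInf {k : ℕ | ∃ ts : List G, (∀ t ∈ ts, IsGenReflection Gen t) ∧ ts.length = k ∧ ts.prod = g}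

/-- The generating set `{s₁, …, sᵢ}` of the standard parabolic subgroup `Wᵢ`. -/
def parabGen {n : ℕ} {W : Type*} [Group W] {M : CoxeterMatrix (Fin n)}
    (cs : CoxeterSystem M W) (i : ℕ) : Set W :=
  {w : W | ∃ b : Fin n, (b : ℕ) < i ∧ w = cs.simple b}

/-- `f(Wᵢ, l, a)`: the number of Boolean involutions in the group generated by
`Gen` having length `l` and absolute length `a` (all notions relative to `Gen`). -/
noncomputable def fCount {G : Type*} [Group G] (Gen : Set G) (l a : ℕ) : ℕ :=
  Set.ncard {w : G | w ∈ Subgroup.closure Gen ∧ w * w = 1 ∧ genBoolean Gen w ∧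
    glen Gen w = l ∧ alen Gen w = a}

namespace BoolInv

/-! ### The geometric representation -/

section Geometric

variable {B W : Type*} [Group W] {M : CoxeterMatrix B} (cs : CoxeterSystem M W)

/-- Twice the canonical bilinear form of a Coxeter matrix, on simple roots:
`2 B(αᵢ, αⱼ) = -2 cos (π / mᵢⱼ)`. For `mᵢⱼ = ∞`, encoded as `0`, the value is `-2`. -/
noncomputable def form (M : CoxeterMatrix B) (i j : B) : ℝ := -2 * Real.cos (Real.pi / M i j)

lemma form_self (i : B) : form M i i = 2 := by simp [form]

lemma form_comm (i j : B) : form M i j = form M j i := by simp [form, M.symmetric i j]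

lemma chebyshev_mul_sin (m : ℕ) (k : ℤ) :
    (Polynomial.Chebyshev.S ℝ k).eval (2 * Real.cos (2 * Real.pi / m)) *
      Real.sin (2 * Real.pi / m) = Real.sin ((k + 1) * (2 * Real.pi / m)) := by
  exact Polynomial.Chebyshev.S_two_mul_real_cos _ _

lemma sin_ne {m : ℕ} (hm : 3 ≤ m) : Real.sin (2 * Real.pi / m) ≠ 0 := by
  have h3 : (3 : ℝ) ≤ m := by exact_mod_cast hm
  apply ne_of_gt
  apply Real.sin_pos_of_pos_of_lt_pi
  · have := Real.pi_pos
    positivity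
  · rw [div_lt_iff₀ (by linarith)]
    nlinarith [Real.pi_pos]

/-- Two reflections whose pairing is `4 cos² (π / m)`, `m ≥ 3`, satisfy the braid relation. -/
lemma reflection_pow {V : Type*} [AddCommGroup V] [Module ℝ V] {x y : V} {f g : Module.Dual ℝ V}
    (hf : f x = 2) (hg : g y = 2) {m : ℕ} (hm : 3 ≤ m)
    (h : f y * g x = 4 * Real.cos (Real.pi / m) ^ 2) :
    (Module.reflection hf * Module.reflection hg) ^ m = 1 := by
  have ht : 2 * Real.cos (2 * Real.pi / m) = f y * g x - 2 := by
    rw [h, mul_div_assoc, Real.cos_two_mul]; ring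
  have hm0 : (m : ℝ) ≠ 0 := by positivity
  have hs := sin_ne hm
  ext z
  rw [Module.reflection_mul_reflection_pow_apply hf hg m z _ ht]
  -- Each Chebyshev coefficient has a factor `S_{p-1}` (if `m = 2p`) or `S_p + S_{p-1}`
  -- (if `m = 2p + 1`), and that factor vanishes at `2 cos (2π / m)`.
  have key : ((Polynomial.Chebyshev.S ℝ ((m - 2 : ℤ) / 2)).eval (2 * Real.cos (2 * Real.pi / m)) *
        ((Polynomial.Chebyshev.S ℝ ((m - 1 : ℤ) / 2)).eval (2 * Real.cos (2 * Real.pi / m)) +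
        (Polynomial.Chebyshev.S ℝ ((m - 3 : ℤ) / 2)).eval (2 * Real.cos (2 * Real.pi / m)))) = 0 ∧
      ((Polynomial.Chebyshev.S ℝ ((m - 1 : ℤ) / 2)).eval (2 * Real.cos (2 * Real.pi / m)) *
        ((Polynomial.Chebyshev.S ℝ ((m : ℤ) / 2)).eval (2 * Real.cos (2 * Real.pi / m)) +
        (Polynomial.Chebyshev.S ℝ ((m - 2 : ℤ) / 2)).eval (2 * Real.cos (2 * Real.pi / m)))) = 0 := by
    obtain ⟨p, rfl | rfl⟩ := Nat.even_or_odd' m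
    · have e1 : ((2 * p : ℕ) - 2 : ℤ) / 2 = p - 1 := by omega
      have e2 : ((2 * p : ℕ) - 1 : ℤ) / 2 = p - 1 := by omega
      have hz : (Polynomial.Chebyshev.S ℝ (p - 1 : ℤ)).eval
          (2 * Real.cos (2 * Real.pi / (2 * p : ℕ))) = 0 := by
        have hp : (p : ℝ) ≠ 0 := by
          intro h0
          apply hm0
          simp [h0]
        have := chebyshev_mul_sin (2 * p) (p - 1)
        have h2 : (((p - 1 : ℤ) : ℝ) + 1) * (2 * Real.pi / (2 * p : ℕ)) = Real.pi := by
          push_cast at hm0 ⊢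
          field_simp
          ring
        rw [h2, Real.sin_pi] at this
        exact (mul_eq_zero.mp this).resolve_right hs
      rw [e1, e2, hz]
      simp
    · have e1 : ((2 * p + 1 : ℕ) - 2 : ℤ) / 2 = p - 1 := by omega
      have e2 : ((2 * p + 1 : ℕ) - 1 : ℤ) / 2 = p := by omega
      have e3 : ((2 * p + 1 : ℕ) - 3 : ℤ) / 2 = p - 1 := by omega
      have e4 : ((2 * p + 1 : ℕ) : ℤ) / 2 = p := by omega
      have hz : (Polynomial.Chebyshev.S ℝ (p : ℤ)).eval
          (2 * Real.cos (2 * Real.pi / (2 * p + 1 : ℕ))) +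
          (Polynomial.Chebyshev.S ℝ (p - 1 : ℤ)).eval
          (2 * Real.cos (2 * Real.pi / (2 * p + 1 : ℕ))) = 0 := by
        have h1 := chebyshev_mul_sin (2 * p + 1) (p - 1)
        have h2 := chebyshev_mul_sin (2 * p + 1) p
        have h3 : (((p : ℤ) : ℝ) + 1) * (2 * Real.pi / (2 * p + 1 : ℕ)) =
            2 * Real.pi - (((p - 1 : ℤ) : ℝ) + 1) * (2 * Real.pi / (2 * p + 1 : ℕ)) := by
          push_cast at hm0 ⊢
          field_simp
          ring
        rw [h3, Real.sin_two_pi_sub, ← h1] at h2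
        apply (mul_eq_zero.mp (?_ : _ * Real.sin (2 * Real.pi / (2 * p + 1 : ℕ)) = 0)).resolve_right
          hs
        linarith
      rw [e1, e2, e3, e4, hz]
      simp
  rw [key.1, key.2]
  simp

variable [Fintype B] [DecidableEq B]

/-- The simple root `αᵢ`, as a basis vector of `B → ℝ`. -/
noncomputable def root (i : B) : B → ℝ := Pi.single i 1

/-- The simple coroot: the linear form `v ↦ 2 B(αᵢ, v)`. -/
noncomputable def coroot (M : CoxeterMatrix B) (i : B) : Module.Dual ℝ (B → ℝ) :=
  ∑ j, form M i j • LinearMap.proj j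

lemma coroot_root (i j : B) : coroot M i (root j) = form M i j := by
  simp [coroot, root, Pi.single_apply, LinearMap.sum_apply]

lemma coroot_root_self (i : B) : coroot M i (root i) = 2 := by rw [coroot_root, form_self]

/-- The reflections `v ↦ v - 2 B(αᵢ, v) αᵢ` satisfy the Coxeter relations. -/
lemma isLiftable_reflection :
    M.IsLiftable (fun i => Module.reflection (coroot_root_self (M := M) i)) := by
  intro i j
  rcases lt_or_ge (M i j) 3 with h | h
  · interval_cases hM : M i j
    · simp
    · have : i = j := by
        by_contra hij
        exact M.off_diagonal i j hij hM
      subst this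
      ext v
      simp [Module.reflection_apply, coroot_root_self]
      ring
    · have h1 : form M i j = 0 := by simp [form, hM]
      have h2 : form M j i = 0 := by rw [form_comm, h1]
      refine LinearEquiv.ext fun v => ?_
      simp [pow_two, Module.reflection_apply, coroot_root, h1, h2, form_self]
      module
  · apply reflection_pow _ _ h
    rw [coroot_root, coroot_root, form_comm j i, form]
    ring

/-- The geometric representation of a Coxeter group on `B → ℝ`. -/
noncomputable def geomRep : W →* ((B → ℝ) ≃ₗ[ℝ] (B → ℝ)) :=
  cs.lift ⟨_, isLiftable_reflection⟩

lemma geomRep_simple (i : B) (v : B → ℝ) :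
    geomRep cs (cs.simple i) v = v - coroot M i v • root i := by
  rw [geomRep, cs.lift_apply_simple, Module.reflection_apply]

/-- A word moves every vector within the span of the simple roots of its letters. -/
lemma geomRep_wordProd_sub_mem (ω : List B) (v : B → ℝ) :
    geomRep cs (cs.wordProd ω) v - v ∈ Submodule.span ℝ (root '' {j | j ∈ ω}) := by
  induction ω with
  | nil => simp
  | cons i ω ih =>
    rw [cs.wordProd_cons, map_mul, LinearEquiv.mul_apply, geomRep_simple, sub_right_comm]
    refine Submodule.sub_mem _ (Submodule.span_mono (Set.image_mono ?_) ih)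
      (Submodule.smul_mem _ _ (Submodule.subset_span ⟨i, by simp, rfl⟩))
    intro j hj
    exact List.mem_cons_of_mem _ hj

omit [Fintype B] in
lemma root_notMem_span {i : B} {K : Set B} (hi : i ∉ K) :
    root i ∉ Submodule.span ℝ (root '' K) := by
  intro h
  have : Submodule.span ℝ (root '' K) ≤ LinearMap.ker (LinearMap.proj (R := ℝ) (φ := fun _ => ℝ) i) := by
    rw [Submodule.span_le]
    rintro _ ⟨j, hj, rfl⟩
    have : i ≠ j := by rintro rfl; exact hi hj
    simp [root, this]
  have := this h
  simp [root] at this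

/-- A word representing the simple reflection `sᵢ` contains the letter `i`. -/
lemma mem_of_wordProd_eq_simple {i : B} {ω : List B} (h : cs.wordProd ω = cs.simple i) :
    i ∈ ω := by
  by_contra hi
  have h1 := geomRep_wordProd_sub_mem cs ω (root i)
  rw [h, geomRep_simple, coroot_root_self] at h1
  have h2 : root i - (2 : ℝ) • root i - root i = (-2 : ℝ) • root i := by module
  rw [h2, Submodule.smul_mem_iff _ (by norm_num)] at h1
  exact root_notMem_span (K := {j | j ∈ ω}) hi h1

lemma simple_injective {i j : B} (h : cs.simple i = cs.simple j) : i = j := by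
  have := mem_of_wordProd_eq_simple cs (i := i) (ω := [j]) (by simp [h])
  simpa using this

lemma form_eq_zero_of_commute {i j : B} (hij : i ≠ j)
    (h : cs.simple i * cs.simple j = cs.simple j * cs.simple i) : form M i j = 0 := by
  have h1 := congrArg (fun g => geomRep cs g (root j) i) h
  simp [geomRep_simple, coroot_root, form_self] at h1
  simp [root, hij] at h1
  linarith

/-- The rank of `ρ(w) - 1`, for the geometric representation `ρ`. -/
noncomputable def moved (w : W) : ℕ :=
  Module.finrank ℝ (LinearMap.range ((geomRep cs w : (B → ℝ) →ₗ[ℝ] (B → ℝ)) - LinearMap.id))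

lemma moved_conj (x w : W) : moved cs (x * w * x⁻¹) = moved cs w := by
  have : ((geomRep cs (x * w * x⁻¹) : (B → ℝ) →ₗ[ℝ] (B → ℝ)) - LinearMap.id) =
      (geomRep cs x : (B → ℝ) →ₗ[ℝ] (B → ℝ)) ∘ₗ
      ((geomRep cs w : (B → ℝ) →ₗ[ℝ] (B → ℝ)) - LinearMap.id) ∘ₗ
      ((geomRep cs x⁻¹ : (B → ℝ) ≃ₗ[ℝ] (B → ℝ)) : (B → ℝ) →ₗ[ℝ] (B → ℝ)) := by
    refine LinearMap.ext fun v => ?_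
    have : geomRep cs x ((geomRep cs x⁻¹) v) = v := by
      rw [← LinearEquiv.mul_apply, ← map_mul]; simp
    simp only [LinearMap.sub_apply, LinearEquiv.coe_coe, map_mul, LinearEquiv.mul_apply,
      LinearMap.id_apply, LinearMap.comp_apply, map_sub, this]
  rw [moved, this, LinearMap.range_comp, LinearMap.range_comp_of_range_eq_top _
    (LinearEquiv.range _), moved]
  exact LinearEquiv.finrank_map_eq (geomRep cs x) _

lemma moved_mul_le (g h : W) : moved cs (g * h) ≤ moved cs g + moved cs h := by
  have : LinearMap.range ((geomRep cs (g * h) : (B → ℝ) →ₗ[ℝ] (B → ℝ)) - LinearMap.id) ≤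
      LinearMap.range ((geomRep cs g : (B → ℝ) →ₗ[ℝ] (B → ℝ)) - LinearMap.id) ⊔
      LinearMap.range ((geomRep cs h : (B → ℝ) →ₗ[ℝ] (B → ℝ)) - LinearMap.id) := by
    rintro _ ⟨v, rfl⟩
    rw [Submodule.mem_sup]
    refine ⟨_, ⟨geomRep cs h v, rfl⟩, _, ⟨v, rfl⟩, ?_⟩
    simp
  exact (Submodule.finrank_mono this).trans (Submodule.finrank_add_le_finrank_add_finrank _ _)

lemma moved_one : moved cs 1 = 0 := by
  have : ((geomRep cs 1 : (B → ℝ) →ₗ[ℝ] (B → ℝ)) - LinearMap.id) = 0 := by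
    ext; simp
  rw [moved, this, LinearMap.range_zero, finrank_bot]

lemma moved_reflection_le {t : W} (ht : cs.IsReflection t) : moved cs t ≤ 1 := by
  obtain ⟨x, i, rfl⟩ := ht
  rw [moved_conj]
  have : LinearMap.range ((geomRep cs (cs.simple i) : (B → ℝ) →ₗ[ℝ] (B → ℝ)) - LinearMap.id) ≤
      Submodule.span ℝ {root i} := by
    rintro _ ⟨v, rfl⟩
    rw [Submodule.mem_span_singleton]
    refine ⟨- coroot M i v, ?_⟩
    simp [geomRep_simple]
  exact (Submodule.finrank_mono this).trans
    ((finrank_span_le_card ({root i} : Set (B → ℝ))).trans (by simp))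

lemma moved_prod_le {ts : List W} (h : ∀ t ∈ ts, cs.IsReflection t) :
    moved cs ts.prod ≤ ts.length := by
  induction ts with
  | nil => simp [moved_one]
  | cons t ts ih =>
    have h1 := ih fun t ht => h t (List.mem_cons_of_mem _ ht)
    have h2 := moved_reflection_le cs (h t List.mem_cons_self)
    have h3 := moved_mul_le cs t ts.prod
    simp only [List.prod_cons, List.length_cons]
    omega

/-- If `sᵢ` commutes with every letter of a word avoiding `i`, then multiplying the product of the
word by `sᵢ` adds the new direction `αᵢ` to the image of `ρ(w) - 1`. -/
lemma moved_mul_simple {i : B} {ω : List B} (hi : i ∉ ω)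
    (h : ∀ j ∈ ω, cs.simple j * cs.simple i = cs.simple i * cs.simple j) :
    moved cs (cs.wordProd ω) + 1 ≤ moved cs (cs.wordProd ω * cs.simple i) := by
  have hform : ∀ j ∈ ω, form M j i = 0 := fun j hj =>
    form_eq_zero_of_commute cs (by rintro rfl; exact hi hj) (h j hj)
  have hfix : ∀ ω : List B, (∀ j ∈ ω, form M j i = 0) →
      geomRep cs (cs.wordProd ω) (root i) = root i := by
    intro ω hω
    induction ω with
    | nil => simp
    | cons j ω ih =>
      rw [cs.wordProd_cons, map_mul, LinearEquiv.mul_apply,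
        ih fun k hk => hω k (List.mem_cons_of_mem _ hk), geomRep_simple, coroot_root,
        hω j List.mem_cons_self]
      simp
  have hfix := hfix ω hform
  set w := cs.wordProd ω
  set R := LinearMap.range ((geomRep cs w : (B → ℝ) →ₗ[ℝ] (B → ℝ)) - LinearMap.id) with hR
  set R' := LinearMap.range ((geomRep cs (w * cs.simple i) : (B → ℝ) →ₗ[ℝ] (B → ℝ)) -
    LinearMap.id) with hR'
  -- `ρ(w)` fixes `αᵢ`, so `ρ(w sᵢ)` negates it
  have hroot : root i ∈ R' := by
    refine ⟨(-1 / 2 : ℝ) • root i, ?_⟩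
    simp [geomRep_simple, coroot_root_self, hfix]
    module
  have hsub : R ≤ R' := by
    rintro _ ⟨v, rfl⟩
    have h1 : (geomRep cs (w * cs.simple i) v - v) + coroot M i v • root i ∈ R' :=
      Submodule.add_mem _ ⟨v, by simp⟩ (Submodule.smul_mem _ _ hroot)
    convert h1 using 1
    simp [geomRep_simple, hfix]
    abel
  have hnot : root i ∉ R := by
    intro hmem
    have : R ≤ Submodule.span ℝ (root '' {j | j ∈ ω}) := by
      rintro _ ⟨v, rfl⟩
      simpa using geomRep_wordProd_sub_mem cs ω v
    exact root_notMem_span (K := {j | j ∈ ω}) hi (this hmem)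
  have hlt : R < R' := lt_of_le_of_ne hsub fun he => hnot (by rw [he]; exact hroot)
  exact Submodule.finrank_lt_finrank_of_lt hlt

end Geometric

end BoolInv

namespace BoolInv

/-! ### Strong exchange -/

section Exchange

variable {B W : Type*} [Group W] {M : CoxeterMatrix B} (cs : CoxeterSystem M W)

open Classical in
/-- The action of the simple reflection `sᵢ` on signed group elements: conjugation by `sᵢ`, the
sign changing exactly at `sᵢ`. It is defined on all of `W`, although only reflections matter. -/
noncomputable def signedConj (i : B) : Function.End (W × ZMod 2) := fun p =>
  (cs.simple i * p.1 * cs.simple i, p.2 + if p.1 = cs.simple i then 1 else 0)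

open Classical in
/-- Powers of `sᵢ sⱼ` in the signed action: the sign changes at `x` once for each palindrome
`sⱼ (sᵢ sⱼ)ˡ`, `l < 2 k`, equal to `x`. -/
lemma signedConj_pow (i j : B) (k : ℕ) (p : W × ZMod 2) :
    ((signedConj cs i * signedConj cs j) ^ k) p =
      ((cs.simple i * cs.simple j) ^ k * p.1 * ((cs.simple i * cs.simple j) ^ k)⁻¹,
        p.2 + ∑ l ∈ Finset.range (2 * k),
          if p.1 = cs.simple j * (cs.simple i * cs.simple j) ^ l then 1 else 0) := by
  induction k with
  | zero => simp; rfl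
  | succ k ih =>
    set c := cs.simple i * cs.simple j with hc
    have hinv : ∀ k : ℕ, cs.simple j * c ^ k = (c ^ k)⁻¹ * cs.simple j := by
      intro k
      induction k with
      | zero => simp
      | succ k ih =>
        have e : (c ^ (k + 1))⁻¹ = (c ^ k)⁻¹ * c⁻¹ := by rw [pow_succ', mul_inv_rev]
        rw [e, pow_succ, ← mul_assoc, ih, hc]
        simp [mul_assoc]
    rw [pow_succ', show ((signedConj cs i * signedConj cs j) *
      (signedConj cs i * signedConj cs j) ^ k) p = signedConj cs i (signedConj cs j
        (((signedConj cs i * signedConj cs j) ^ k) p)) from rfl, ih]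
    have h1 : (c ^ k * p.1 * (c ^ k)⁻¹ = cs.simple j) ↔ p.1 = cs.simple j * c ^ (2 * k) := by
      rw [two_mul, pow_add, ← mul_assoc, hinv, mul_inv_eq_iff_eq_mul, mul_assoc,
        ← eq_inv_mul_iff_mul_eq]
    have h2 : (cs.simple j * (c ^ k * p.1 * (c ^ k)⁻¹) * cs.simple j = cs.simple i) ↔
        p.1 = cs.simple j * c ^ (2 * k + 1) := by
      have e : cs.simple j * c ^ (2 * k + 1) =
          (c ^ k)⁻¹ * (cs.simple j * cs.simple i * cs.simple j) * c ^ k := by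
        rw [two_mul, add_assoc, pow_add, ← mul_assoc, hinv, add_comm, pow_add, pow_one, hc]
        simp only [mul_assoc]
      rw [e]
      constructor
      · intro h
        rw [← h]
        simp [mul_assoc]
      · intro h
        rw [h]
        simp [mul_assoc]
    simp only [signedConj, h1, h2]
    rw [show 2 * (k + 1) = 2 * k + 1 + 1 by ring, Finset.sum_range_succ, Finset.sum_range_succ,
      pow_succ' c k]
    refine Prod.ext ?_ ?_
    · simp [hc, mul_assoc]
    · simp [add_assoc]

/-- For `k = mᵢⱼ` the list of `2 mᵢⱼ` palindromes runs twice through the same elements, so all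
signs cancel. -/
lemma isLiftable_signedConj : M.IsLiftable (signedConj cs) := by
  classical
  intro i j
  funext p
  rw [signedConj_pow, cs.simple_mul_simple_pow, two_mul, Finset.sum_range_add]
  simp only [pow_add, cs.simple_mul_simple_pow, one_mul, ← two_mul]
  rw [show (2 : ZMod 2) = 0 from rfl]
  simp
  rfl

/-- The signed conjugation action of `W`. -/
noncomputable def signedAct : W →* Function.End (W × ZMod 2) :=
  cs.lift ⟨_, isLiftable_signedConj cs⟩

lemma signedAct_simple (i : B) : signedAct cs (cs.simple i) = signedConj cs i :=
  cs.lift_apply_simple _ _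

open Classical in
lemma signedAct_wordProd (ω : List B) (p : W × ZMod 2) :
    signedAct cs (cs.wordProd ω) p =
      (cs.wordProd ω * p.1 * (cs.wordProd ω)⁻¹, p.2 + ((cs.rightInvSeq ω).count p.1 : ZMod 2)) := by
  induction ω with
  | nil => simp; rfl
  | cons i ω ih =>
    rw [cs.wordProd_cons, map_mul, show (signedAct cs (cs.simple i) *
      signedAct cs (cs.wordProd ω)) p = signedAct cs (cs.simple i)
        (signedAct cs (cs.wordProd ω) p) from rfl, ih, signedAct_simple]
    have h : (cs.wordProd ω * p.1 * (cs.wordProd ω)⁻¹ = cs.simple i) ↔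
        ((cs.wordProd ω)⁻¹ * cs.simple i * cs.wordProd ω) = p.1 := by
      constructor
      · intro h
        rw [← h]
        simp [mul_assoc]
      · intro h
        rw [← h]
        simp [mul_assoc]
    simp only [signedConj, h, CoxeterSystem.rightInvSeq, List.count_cons, beq_iff_eq]
    refine Prod.ext ?_ ?_
    · simp [mul_assoc]
    · simp [add_assoc]

/-- The parity of the number of occurrences of `x` in the right inversion sequence of any word
for `w`. -/
noncomputable def invParity (w x : W) : ZMod 2 := (signedAct cs w (x, 0)).2

open Classical in
lemma invParity_wordProd (ω : List B) (x : W) :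
    invParity cs (cs.wordProd ω) x = ((cs.rightInvSeq ω).count x : ZMod 2) := by
  rw [invParity, signedAct_wordProd]; simp

lemma signedAct_apply (w x : W) (e : ZMod 2) :
    signedAct cs w (x, e) = (w * x * w⁻¹, e + invParity cs w x) := by
  classical
  obtain ⟨ω, rfl⟩ := cs.wordProd_surjective w
  rw [invParity_wordProd, signedAct_wordProd]

lemma invParity_mul (g h x : W) :
    invParity cs (g * h) x = invParity cs h x + invParity cs g (h * x * h⁻¹) := by
  rw [invParity, map_mul, show (signedAct cs g * signedAct cs h) (x, 0) =
    signedAct cs g (signedAct cs h (x, 0)) from rfl, signedAct_apply, signedAct_apply]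
  simp

lemma invParity_one (x : W) : invParity cs 1 x = 0 := by
  rw [invParity, map_one]; rfl

lemma invParity_self {t : W} (ht : cs.IsReflection t) : invParity cs t t = 1 := by
  obtain ⟨w, i, rfl⟩ := ht
  have h1 : invParity cs (cs.simple i) (cs.simple i) = 1 := by
    rw [invParity, signedAct_simple]; simp [signedConj]
  have h2 := invParity_mul cs w w⁻¹ (w * cs.simple i * w⁻¹)
  rw [mul_inv_cancel, invParity_one] at h2
  rw [invParity_mul, invParity_mul]
  have e : w⁻¹ * (w * cs.simple i * w⁻¹) * w⁻¹⁻¹ = cs.simple i := by simp [mul_assoc]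
  rw [e] at h2 ⊢
  rw [show cs.simple i * cs.simple i * (cs.simple i)⁻¹ = cs.simple i by simp, h1]
  linear_combination -h2

/-- The strong exchange property, for words that need not be reduced. -/
lemma strong_exchange {t : W} (ht : cs.IsReflection t) (ω : List B)
    (h : cs.length (cs.wordProd ω * t) < cs.length (cs.wordProd ω)) :
    ∃ j, j < ω.length ∧ cs.wordProd ω * t = cs.wordProd (ω.eraseIdx j) := by
  classical
  have hpar : invParity cs (cs.wordProd ω) t ≠ 0 := by
    intro h0
    -- then `t` is a right inversion of `w t`, where `w` is the product of `ω`
    obtain ⟨ω', hω', he⟩ := cs.exists_isReduced (cs.wordProd ω * t)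
    have h1 : invParity cs (cs.wordProd ω') t = 1 := by
      rw [← he, invParity_mul, invParity_self cs ht]
      simp [h0]
    rw [invParity_wordProd] at h1
    have hmem : t ∈ cs.rightInvSeq ω' := by
      by_contra hn
      rw [List.count_eq_zero_of_not_mem hn] at h1
      simp at h1
    have h2 := (cs.isRightInversion_of_mem_rightInvSeq hω' hmem).2
    rw [← he, mul_assoc, ht.mul_self, mul_one] at h2
    omega
  rw [invParity_wordProd] at hpar
  have hmem : t ∈ cs.rightInvSeq ω := by
    by_contra hn
    rw [List.count_eq_zero_of_not_mem hn] at hpar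
    simp at hpar
  obtain ⟨j, hj, rfl⟩ := List.mem_iff_getElem.mp hmem
  refine ⟨j, by simpa using hj, ?_⟩
  rw [← cs.wordProd_mul_getD_rightInvSeq, List.getD_eq_getElem _ _ hj]

end Exchange

/-! ### Bruhat order -/

section Bruhat

variable {B W : Type*} [Group W] {M : CoxeterMatrix B} (cs : CoxeterSystem M W)

/-- A length-increasing right multiplication by a reflection: an edge of the Bruhat graph. -/
def Step (u w : W) : Prop := ∃ t, cs.IsReflection t ∧ w = u * t ∧ cs.length u < cs.length w

/-- The Bruhat order of the whole Coxeter group. -/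
def Le (u w : W) : Prop := Relation.ReflTransGen (Step cs) u w

variable {cs}

lemma Le.refl (u : W) : Le cs u u := Relation.ReflTransGen.refl

lemma Le.trans {u v w : W} (h : Le cs u v) (h' : Le cs v w) : Le cs u w :=
  Relation.ReflTransGen.trans h h'

lemma Le.length_le {u w : W} (h : Le cs u w) : cs.length u ≤ cs.length w := by
  induction h with
  | refl => exact le_rfl
  | tail _ h ih => obtain ⟨t, _, _, h⟩ := h; omega

lemma Le.eq_of_length {u w : W} (h : Le cs u w) (hl : cs.length w ≤ cs.length u) : u = w := by
  rcases Relation.ReflTransGen.cases_tail h with h | ⟨v, h1, t, _, _, h2⟩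
  · exact h.symm
  · have := Le.length_le h1
    omega

lemma Le.antisymm {u w : W} (h : Le cs u w) (h' : Le cs w u) : u = w :=
  h.eq_of_length h'.length_le

lemma Step.le {u w : W} (h : Step cs u w) : Le cs u w := Relation.ReflTransGen.single h

lemma Step.inv {u w : W} (h : Step cs u w) : Step cs u⁻¹ w⁻¹ := by
  obtain ⟨t, ht, rfl, hl⟩ := h
  refine ⟨u * t * u⁻¹, ht.conj u, ?_, by rw [cs.length_inv, cs.length_inv]; exact hl⟩
  simp [ht.inv, mul_assoc]

lemma Le.inv {u w : W} (h : Le cs u w) : Le cs u⁻¹ w⁻¹ := by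
  induction h with
  | refl => exact Le.refl _
  | tail _ h ih => exact ih.trans h.inv.le

lemma Step.exists_sublist {u w : W} (h : Step cs u w) {ω : List B} (hω : cs.wordProd ω = w) :
    ∃ ω', ω'.Sublist ω ∧ cs.wordProd ω' = u := by
  obtain ⟨t, ht, rfl, hl⟩ := h
  have e : cs.wordProd ω * t = u := by rw [hω, mul_assoc, ht.mul_self, mul_one]
  obtain ⟨j, _, hj⟩ := strong_exchange cs ht ω (by rw [e, hω]; exact hl)
  exact ⟨_, List.eraseIdx_sublist _ _, by rw [← hj, e]⟩

/-- Elements below `w` are products of subwords of every word for `w`. -/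
lemma Le.exists_sublist {u w : W} (h : Le cs u w) {ω : List B} (hω : cs.wordProd ω = w) :
    ∃ ω', ω'.Sublist ω ∧ cs.wordProd ω' = u := by
  induction h generalizing ω with
  | refl => exact ⟨ω, List.Sublist.refl _, hω⟩
  | tail _ h ih =>
    obtain ⟨ω₁, h1, h2⟩ := h.exists_sublist hω
    obtain ⟨ω₂, h3, h4⟩ := ih h2
    exact ⟨ω₂, h3.trans h1, h4⟩

lemma le_mul_simple {w : W} {i : B} (h : cs.length w < cs.length (w * cs.simple i)) :
    Le cs w (w * cs.simple i) :=
  Step.le ⟨_, cs.isReflection_simple i, rfl, h⟩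

lemma mul_simple_le {w : W} {i : B} (h : cs.length (w * cs.simple i) < cs.length w) :
    Le cs (w * cs.simple i) w := by
  refine Step.le ⟨_, cs.isReflection_simple i, ?_, h⟩
  simp

/-- The lifting property of the Bruhat order. -/
lemma Le.mul_simple {u w : W} (h : Le cs u w) (i : B) :
    Le cs (u * cs.simple i) w ∨ Le cs (u * cs.simple i) (w * cs.simple i) := by
  induction h using Relation.ReflTransGen.head_induction_on with
  | refl => exact Or.inr (Le.refl _)
  | @head u v hstep hle ih =>
    have huw : Le cs u w := hstep.le.trans hle
    obtain ⟨t, ht, rfl, hl⟩ := hstep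
    rcases cs.length_mul_simple u i with h | h
    · by_cases hti : t = cs.simple i
      · left
        rw [← hti]
        exact hle
      · have hs : Step cs (u * cs.simple i) (u * t * cs.simple i) := by
          refine ⟨cs.simple i * t * cs.simple i, ?_, ?_, ?_⟩
          · simpa using ht.conj (cs.simple i)
          · simp [mul_assoc]
          · by_contra hlt
            -- otherwise, exchange in a reduced word of `u` followed by `i` contradicts `ℓ u < ℓ ut`
            have hr : cs.IsReflection (cs.simple i * t * cs.simple i) := by
              simpa using ht.conj (cs.simple i)
            obtain ⟨ω, hω, rfl⟩ := cs.exists_isReduced u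
            have e : cs.wordProd (ω ++ [i]) * (cs.simple i * t * cs.simple i) =
                cs.wordProd ω * t * cs.simple i := by simp [cs.wordProd_append, mul_assoc]
            have hne := hr.length_mul_left_ne (cs.wordProd (ω ++ [i]))
            have e' : cs.wordProd (ω ++ [i]) = cs.wordProd ω * cs.simple i := by
              simp [cs.wordProd_append]
            obtain ⟨j, hj, he⟩ := strong_exchange cs hr (ω ++ [i]) (by
              rw [e] at hne ⊢
              rw [e'] at hne ⊢
              omega)
            rw [e] at he
            rw [List.length_append, List.length_singleton] at hj
            rcases Nat.lt_or_ge j ω.length with hj' | hj'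
            · rw [List.eraseIdx_append_of_lt_length hj', cs.wordProd_append,
                cs.wordProd_singleton, mul_left_inj] at he
              have h1 := cs.length_wordProd_le (ω.eraseIdx j)
              have h2 := List.length_eraseIdx_of_lt hj'
              have h3 : cs.length (cs.wordProd ω) = ω.length := hω
              rw [← he] at h1
              omega
            · obtain rfl : j = ω.length := by omega
              rw [List.eraseIdx_append_of_length_le le_rfl] at he
              simp [mul_assoc] at he
              exact hti (mul_eq_one_iff_eq_inv.mp he |>.trans (by simp))
        rcases ih with h | h
        · exact Or.inl (hs.le.trans h)
        · exact Or.inr (hs.le.trans h)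
    · left
      exact (mul_simple_le (by omega)).trans huw

lemma Le.mul_simple_of_lt {u w : W} (h : Le cs u w) {i : B}
    (hi : cs.length w < cs.length (w * cs.simple i)) :
    Le cs (u * cs.simple i) (w * cs.simple i) :=
  (h.mul_simple i).elim (fun h => h.trans (le_mul_simple hi)) id

lemma Le.simple_mul_of_lt {u w : W} (h : Le cs u w) {i : B}
    (hi : cs.length w < cs.length (cs.simple i * w)) :
    Le cs (cs.simple i * u) (cs.simple i * w) := by
  have := h.inv.mul_simple_of_lt (i := i) (by
    rw [cs.length_inv, show w⁻¹ * cs.simple i = (cs.simple i * w)⁻¹ by simp, cs.length_inv]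
    exact hi)
  simpa using this.inv

lemma le_simple_mul {w : W} {i : B} (h : cs.length w < cs.length (cs.simple i * w)) :
    Le cs w (cs.simple i * w) := by
  have := le_mul_simple (cs := cs) (w := w⁻¹) (i := i) (by
    rw [cs.length_inv, show w⁻¹ * cs.simple i = (cs.simple i * w)⁻¹ by simp, cs.length_inv]
    exact h)
  simpa using this.inv

lemma one_le (w : W) : Le cs 1 w := by
  obtain ⟨ω, hω, rfl⟩ := cs.exists_isReduced w
  induction ω using List.reverseRecOn with
  | nil => simpa using Le.refl _
  | append_singleton ω i ih =>
    have h1 : cs.IsReduced ω := by simpa using hω.take ω.length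
    have h2 : cs.length (cs.wordProd ω) = ω.length := h1
    have h3 : cs.length (cs.wordProd (ω ++ [i])) = (ω ++ [i]).length := hω
    rw [cs.wordProd_append, cs.wordProd_singleton] at h3 ⊢
    refine (ih h1).trans (le_mul_simple ?_)
    simp at h3
    omega

end Bruhat

/-! ### Supports -/

section Support

variable {B W : Type*} [Group W] {M : CoxeterMatrix B} {cs : CoxeterSystem M W}

variable (cs) in
/-- The support of `w`: the indices of the simple reflections below `w` in the Bruhat order,
equivalently the letters of any reduced word. -/
def supp (w : W) : Set B := {i | Le cs (cs.simple i) w}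

lemma supp_mono {u w : W} (h : Le cs u w) : supp cs u ⊆ supp cs w := fun _ hi => Le.trans hi h

lemma supp_inv (w : W) : supp cs w⁻¹ = supp cs w := by
  ext i
  constructor
  · intro h
    have := Le.inv (show Le cs (cs.simple i) w⁻¹ from h)
    rwa [inv_inv, cs.inv_simple] at this
  · intro h
    have := Le.inv (show Le cs (cs.simple i) w from h)
    rwa [cs.inv_simple] at this

lemma mem_supp_of_mem_reduced {ω : List B} (hω : cs.IsReduced ω) {i : B} (hi : i ∈ ω) :
    i ∈ supp cs (cs.wordProd ω) := by
  induction ω using List.reverseRecOn with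
  | nil => simp at hi
  | append_singleton ω j ih =>
    have h1 : cs.IsReduced ω := by simpa using hω.take ω.length
    have h2 : cs.length (cs.wordProd ω) = ω.length := h1
    have h3 : cs.length (cs.wordProd (ω ++ [j])) = (ω ++ [j]).length := hω
    rw [cs.wordProd_append, cs.wordProd_singleton] at h3 ⊢
    have h4 : cs.length (cs.wordProd ω) < cs.length (cs.wordProd ω * cs.simple j) := by
      simp at h3
      omega
    rcases List.mem_append.mp hi with h | h
    · exact supp_mono (le_mul_simple h4) (ih h1 h)
    · obtain rfl := List.mem_singleton.mp h
      have := (one_le (cs := cs) (cs.wordProd ω)).mul_simple_of_lt h4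
      rwa [one_mul] at this

variable {v : W} {i : B}

lemma length_mul_of_notMem (hi : i ∉ supp cs v) :
    cs.length (v * cs.simple i) = cs.length v + 1 := by
  rcases cs.length_mul_simple v i with h | h
  · exact h
  · exfalso
    apply hi
    have h1 : cs.length (v * cs.simple i) < cs.length (v * cs.simple i * cs.simple i) := by
      simp; omega
    have h2 := (one_le (cs := cs) (v * cs.simple i)).mul_simple_of_lt h1
    change Le cs (cs.simple i) v
    simpa using h2

lemma length_simple_mul_of_notMem (hi : i ∉ supp cs v) :
    cs.length (cs.simple i * v) = cs.length v + 1 := by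
  rw [← cs.length_inv, mul_inv_rev, cs.inv_simple, length_mul_of_notMem (by rwa [supp_inv]),
    cs.length_inv]

lemma mem_supp_mul (hi : i ∉ supp cs v) : i ∈ supp cs (v * cs.simple i) := by
  have h2 := (one_le (cs := cs) v).mul_simple_of_lt (i := i) (by
    rw [length_mul_of_notMem hi]; omega)
  change Le cs (cs.simple i) _
  simpa using h2

variable [Fintype B] [DecidableEq B]

lemma mem_of_mem_supp {ω : List B} {i : B} (hi : i ∈ supp cs (cs.wordProd ω)) : i ∈ ω := by
  obtain ⟨ω', h1, h2⟩ := Le.exists_sublist hi rfl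
  exact h1.subset (mem_of_wordProd_eq_simple cs h2)

variable (cs) in
lemma exists_reduced (w : W) :
    ∃ ω, cs.IsReduced ω ∧ cs.wordProd ω = w ∧ ∀ i, i ∈ ω ↔ i ∈ supp cs w := by
  obtain ⟨ω, h, rfl⟩ := cs.exists_isReduced w
  exact ⟨ω, h, rfl, fun i => ⟨mem_supp_of_mem_reduced h, mem_of_mem_supp⟩⟩

lemma supp_mul (u w : W) : supp cs (u * w) ⊆ supp cs u ∪ supp cs w := by
  obtain ⟨ω, _, rfl, h1⟩ := exists_reduced cs u
  obtain ⟨ω', _, rfl, h2⟩ := exists_reduced cs w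
  intro i hi
  rw [← cs.wordProd_append] at hi
  rcases List.mem_append.mp (mem_of_mem_supp hi) with h | h
  · exact Or.inl ((h1 i).mp h)
  · exact Or.inr ((h2 i).mp h)

lemma supp_one : supp cs (1 : W) = ∅ := by
  ext i
  constructor
  · intro h
    have := mem_of_mem_supp (cs := cs) (ω := []) (i := i) (by simpa using h)
    simp at this
  · rintro ⟨⟩

lemma supp_simple (i : B) : supp cs (cs.simple i) = {i} := by
  ext j
  constructor
  · intro h
    have := mem_of_mem_supp (cs := cs) (ω := [i]) (i := j) (by simpa using h)
    simpa using this
  · rintro rfl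
    exact Le.refl _

lemma supp_mul_subset {u w : W} {K : Set B} (hu : supp cs u ⊆ K) (hw : supp cs w ⊆ K) :
    supp cs (u * w) ⊆ K := (supp_mul u w).trans (Set.union_subset hu hw)

lemma supp_wordProd_subset {ω : List B} {K : Set B} (h : ∀ i ∈ ω, i ∈ K) :
    supp cs (cs.wordProd ω) ⊆ K := fun _ hi => h _ (mem_of_mem_supp hi)

lemma supp_mul_simple (hi : i ∉ supp cs v) :
    supp cs (v * cs.simple i) = insert i (supp cs v) := by
  apply Set.Subset.antisymm
  · refine (supp_mul _ _).trans ?_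
    rw [supp_simple, Set.union_singleton]
  · refine Set.insert_subset (mem_supp_mul hi) (supp_mono (le_mul_simple ?_))
    rw [length_mul_of_notMem hi]; omega

lemma supp_simple_mul (hi : i ∉ supp cs v) :
    supp cs (cs.simple i * v) = insert i (supp cs v) := by
  rw [← supp_inv, mul_inv_rev, cs.inv_simple, supp_mul_simple (by rwa [supp_inv]), supp_inv]

/-- If `x` and `sᵢ x sᵢ` both avoid the letter `i`, they are equal. -/
lemma conj_eq_of_notMem (hi : i ∉ supp cs v) (h : i ∉ supp cs (cs.simple i * v * cs.simple i)) :
    cs.simple i * v * cs.simple i = v := by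
  obtain ⟨ω, _, rfl, hω⟩ := exists_reduced cs v
  set y := cs.simple i * cs.wordProd ω * cs.simple i with hy
  have h1 : y * cs.simple i = cs.wordProd (i :: ω) := by simp [hy, cs.wordProd_cons]
  have h2 := length_mul_of_notMem h
  rw [h1] at h2
  have h3 : cs.wordProd (i :: ω) * cs.simple i = y := by rw [← h1]; simp
  obtain ⟨j, _, hj⟩ := strong_exchange cs (cs.isReflection_simple i) (i :: ω) (by
    rw [h3, h2]; omega)
  rw [h3] at hj
  -- deleting `i` itself gives the claim; deleting a letter of `ω` puts `i` in the support of `y`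
  rcases j with _ | j
  · simpa using hj
  · exfalso
    rw [List.eraseIdx_cons_succ, cs.wordProd_cons] at hj
    have h4 : i ∉ supp cs (cs.wordProd (ω.eraseIdx j)) := fun h' =>
      hi ((hω i).mp ((List.eraseIdx_sublist _ _).subset (mem_of_mem_supp h')))
    apply h
    rw [hj, supp_simple_mul h4]
    exact Set.mem_insert _ _

/-- Twisted conjugation of an element by a new letter not commuting with it adds two to the
length. -/
lemma length_conj (hi : i ∉ supp cs v) (h : v * cs.simple i ≠ cs.simple i * v) :
    cs.length (cs.simple i * v * cs.simple i) = cs.length v + 2 := by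
  obtain ⟨ω, _, rfl, hω⟩ := exists_reduced cs v
  have h1 := length_simple_mul_of_notMem hi
  rcases cs.length_mul_simple (cs.simple i * cs.wordProd ω) i with h2 | h2
  · omega
  · exfalso
    rw [← cs.wordProd_cons] at h2
    obtain ⟨j, _, hj⟩ := strong_exchange cs (cs.isReflection_simple i) (i :: ω) (by omega)
    have : i ∉ supp cs (cs.simple i * cs.wordProd ω * cs.simple i) → False := by
      intro h3
      have h4 := conj_eq_of_notMem hi h3
      apply h
      conv_lhs => rw [← h4]
      simp
    rw [cs.wordProd_cons] at hj
    rcases j with _ | j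
    · rw [hj] at this
      exact this (by simpa using hi)
    · rw [List.eraseIdx_cons_succ, cs.wordProd_cons, mul_assoc, mul_right_inj] at hj
      -- `v sᵢ` would be a product of letters of `v`
      apply hi
      refine (hω i).mp ((List.eraseIdx_sublist _ _).subset
        (mem_of_mem_supp (cs := cs) (ω := ω.eraseIdx j) ?_))
      rw [← hj]
      exact mem_supp_mul hi

lemma length_lt_conj (hi : i ∉ supp cs v) (h : v * cs.simple i ≠ cs.simple i * v) :
    cs.length (cs.simple i * v) < cs.length (cs.simple i * v * cs.simple i) := by
  rw [length_conj hi h, length_simple_mul_of_notMem hi]; omega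

lemma le_conj (hi : i ∉ supp cs v) (h : v * cs.simple i ≠ cs.simple i * v) :
    Le cs v (cs.simple i * v * cs.simple i) :=
  (le_simple_mul (by rw [length_simple_mul_of_notMem hi]; omega)).trans
    (le_mul_simple (length_lt_conj hi h))

lemma supp_conj (hi : i ∉ supp cs v) (h : v * cs.simple i ≠ cs.simple i * v) :
    supp cs (cs.simple i * v * cs.simple i) = insert i (supp cs v) := by
  apply Set.Subset.antisymm
  · apply supp_mul_subset
    · rw [supp_simple_mul hi]
    · rw [supp_simple]; simp
  · rw [← supp_simple_mul hi]
    exact supp_mono (le_mul_simple (length_lt_conj hi h))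

/-- A simple reflection `sᵢ` outside the support of `w` that commutes with `w` commutes with every
letter of `w`. -/
lemma commute_letters : ∀ (w : W), i ∉ supp cs w → w * cs.simple i = cs.simple i * w →
    ∀ j ∈ supp cs w, cs.simple j * cs.simple i = cs.simple i * cs.simple j := by
  suffices H : ∀ ω : List B, cs.IsReduced ω → i ∉ ω →
      cs.wordProd ω * cs.simple i = cs.simple i * cs.wordProd ω →
      ∀ j ∈ ω, cs.simple j * cs.simple i = cs.simple i * cs.simple j by
    intro w hi hw j hj
    obtain ⟨ω, h1, rfl, h2⟩ := exists_reduced cs w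
    exact H ω h1 (fun h => hi ((h2 i).mp h)) hw j ((h2 j).mpr hj)
  intro ω hω hi hcomm
  induction ω with
  | nil => simp
  | cons k ω ih =>
    have hω' : cs.IsReduced ω := by simpa using hω.drop 1
    have hik : i ≠ k := by rintro rfl; simp at hi
    have hiω : i ∉ ω := fun h => hi (List.mem_cons_of_mem _ h)
    have hlk : cs.length (cs.wordProd (k :: ω)) = ω.length + 1 := hω
    have hl : cs.length (cs.wordProd ω) = ω.length := hω'
    have hni : i ∉ supp cs (cs.wordProd (k :: ω)) := fun h => hi (mem_of_mem_supp h)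
    have hni' : i ∉ supp cs (cs.wordProd ω) := fun h => hiω (mem_of_mem_supp h)
    -- `X = sᵢ w = w sᵢ` begins with `i`, while `sₖ X` is shorter than `X`
    set X := cs.wordProd (i :: k :: ω) with hX
    have hXe : X = cs.simple i * cs.wordProd (k :: ω) := cs.wordProd_cons _ _
    have hXe' : X = cs.wordProd (k :: ω) * cs.simple i := by rw [hXe, hcomm]
    have hkX : cs.simple k * X = cs.wordProd ω * cs.simple i := by
      rw [hXe', cs.wordProd_cons, mul_assoc, cs.simple_mul_simple_cancel_left]
    have hXl : cs.length X = ω.length + 2 := by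
      rw [hXe', length_mul_of_notMem hni, hlk]
    have eX : X * (X⁻¹ * cs.simple k * X⁻¹⁻¹) = cs.wordProd ω * cs.simple i := by
      rw [← hkX]; simp [mul_assoc]
    obtain ⟨j, _, hj⟩ := strong_exchange cs ((cs.isReflection_simple k).conj X⁻¹) (i :: k :: ω) (by
      rw [← hX, eX, hXl, length_mul_of_notMem hni', hl]; omega)
    rw [← hX, eX] at hj
    rcases j with _ | j
    · exfalso
      rw [List.eraseIdx_cons_zero, ← hkX, hXe, ← mul_assoc, mul_eq_right,
        mul_eq_one_iff_eq_inv, cs.inv_simple] at hj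
      exact hik (simple_injective cs hj).symm
    · rw [List.eraseIdx_cons_succ, cs.wordProd_cons] at hj
      have h1 : cs.simple i * cs.wordProd ω * cs.simple i =
          cs.wordProd ((k :: ω).eraseIdx j) := by
        rw [mul_assoc, hj, cs.simple_mul_simple_cancel_left]
      have h2 := conj_eq_of_notMem hni' (by
        rw [h1]
        exact fun h => hi ((List.eraseIdx_sublist _ _).subset (mem_of_mem_supp h)))
      have h3 : cs.wordProd ω * cs.simple i = cs.simple i * cs.wordProd ω := by
        conv_lhs => rw [← h2]
        simp
      have h4 : cs.simple k * cs.simple i = cs.simple i * cs.simple k := by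
        rw [cs.wordProd_cons, mul_assoc, h3, ← mul_assoc, ← mul_assoc, mul_left_inj] at hcomm
        exact hcomm
      intro m hm
      rcases List.mem_cons.mp hm with rfl | hm
      · exact h4
      · exact ih hω' hiω h3 m hm

end Support

end BoolInv

namespace BoolInv

/-! ### Involutions without repeated letters -/

section Twisted

variable {B W : Type*} [Group W] {M : CoxeterMatrix B} {cs : CoxeterSystem M W}

variable (cs) in
/-- The involutions obtained from `1` by repeatedly applying twisted conjugation
`v ↦ v sᵢ` (if `sᵢ` commutes with `v`) or `v ↦ sᵢ v sᵢ` (otherwise), each time with a letter `i`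
not used before. -/
inductive NoRepeat : W → Prop
  | one : NoRepeat 1
  | comm {v : W} {i : B} : NoRepeat v → i ∉ supp cs v → v * cs.simple i = cs.simple i * v →
      NoRepeat (v * cs.simple i)
  | conj {v : W} {i : B} : NoRepeat v → i ∉ supp cs v → v * cs.simple i ≠ cs.simple i * v →
      NoRepeat (cs.simple i * v * cs.simple i)

lemma mul_self_of_comm {v : W} {i : B} (hv : v * v = 1)
    (h : v * cs.simple i = cs.simple i * v) : (v * cs.simple i) * (v * cs.simple i) = 1 := by
  have : (v * cs.simple i) * (v * cs.simple i) = (v * v) * (cs.simple i * cs.simple i) := by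
    conv_lhs => rw [mul_assoc, ← mul_assoc (cs.simple i), ← h]
    simp only [mul_assoc]
  rw [this, hv]; simp

lemma mul_self_conj {v : W} {i : B} (hv : v * v = 1) :
    (cs.simple i * v * cs.simple i) * (cs.simple i * v * cs.simple i) = 1 := by
  have : (cs.simple i * v * cs.simple i) * (cs.simple i * v * cs.simple i) =
      cs.simple i * (v * v) * cs.simple i := by simp [mul_assoc]
  rw [this, hv]; simp

lemma NoRepeat.mul_self {w : W} (h : NoRepeat cs w) : w * w = 1 := by
  induction h with
  | one => simp
  | comm _ _ h ih => exact mul_self_of_comm ih h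
  | conj _ _ _ ih => exact mul_self_conj ih

/-- Subwords of a reduced word give smaller elements. -/
lemma le_of_sublist {ω ω' : List B} (hω : cs.IsReduced ω) (h : ω'.Sublist ω) :
    Le cs (cs.wordProd ω') (cs.wordProd ω) := by
  induction ω using List.reverseRecOn generalizing ω' with
  | nil => rw [List.sublist_nil.mp h]; exact Le.refl _
  | append_singleton ω j ih =>
    have h1 : cs.IsReduced ω := by simpa using hω.take ω.length
    have h2 : cs.length (cs.wordProd ω) = ω.length := h1
    have h3 : cs.length (cs.wordProd (ω ++ [j])) = (ω ++ [j]).length := hω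
    rw [cs.wordProd_append, cs.wordProd_singleton, List.length_append,
      List.length_singleton] at h3
    obtain ⟨a, b, rfl, ha, hb⟩ := List.sublist_append_iff.mp h
    rw [cs.wordProd_append, cs.wordProd_append, cs.wordProd_singleton]
    rcases List.sublist_singleton.mp hb with rfl | rfl
    · rw [cs.wordProd_nil, mul_one]
      exact (ih h1 ha).trans (le_mul_simple (by omega))
    · rw [cs.wordProd_singleton]
      exact (ih h1 ha).mul_simple_of_lt (by omega)

variable {v : W} {i : B}

open Classical in
variable (cs) in
/-- Twisted conjugation by `sᵢ`. -/
noncomputable def tw (i : B) (v : W) : W :=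
  if v * cs.simple i = cs.simple i * v then v * cs.simple i else cs.simple i * v * cs.simple i

lemma tw_of_comm (h : v * cs.simple i = cs.simple i * v) : tw cs i v = v * cs.simple i := if_pos h

lemma tw_of_not_comm (h : v * cs.simple i ≠ cs.simple i * v) :
    tw cs i v = cs.simple i * v * cs.simple i := if_neg h

lemma mul_self_tw (hv : v * v = 1) : tw cs i v * tw cs i v = 1 := by
  by_cases h : v * cs.simple i = cs.simple i * v
  · rw [tw_of_comm h]; exact mul_self_of_comm hv h
  · rw [tw_of_not_comm h]; exact mul_self_conj hv

lemma NoRepeat.tw_step (h : NoRepeat cs v) (hi : i ∉ supp cs v) : NoRepeat cs (tw cs i v) := by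
  by_cases hc : v * cs.simple i = cs.simple i * v
  · rw [tw_of_comm hc]; exact h.comm hi hc
  · rw [tw_of_not_comm hc]; exact h.conj hi hc

/-- Induction on `NoRepeat` in terms of twisted conjugation. -/
lemma NoRepeat.tw_induction {P : W → Prop} (h1 : P 1)
    (h2 : ∀ v i, NoRepeat cs v → i ∉ supp cs v → P v → P (tw cs i v)) {w : W}
    (h : NoRepeat cs w) : P w := by
  induction h with
  | one => exact h1
  | comm hv hi h ih => rw [← tw_of_comm h]; exact h2 _ _ hv hi ih
  | conj hv hi h ih => rw [← tw_of_not_comm h]; exact h2 _ _ hv hi ih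

variable [Fintype B] [DecidableEq B]

/-- If `y` avoids the letter `i` and `y sᵢ` is an involution, then `y` is an involution commuting
with `sᵢ`. -/
lemma involution_of_mul_simple {y : W} (hi : i ∉ supp cs y)
    (h : (y * cs.simple i) * (y * cs.simple i) = 1) :
    y * y = 1 ∧ y * cs.simple i = cs.simple i * y := by
  have e : cs.simple i * y * cs.simple i = y⁻¹ := by
    exact eq_inv_of_mul_eq_one_right (by rw [← h]; simp [mul_assoc])
  have h1 := conj_eq_of_notMem hi (by rw [e, supp_inv]; exact hi)
  refine ⟨?_, ?_⟩
  · rw [mul_eq_one_iff_eq_inv, ← e, h1]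
  · conv_lhs => rw [← h1]
    simp

lemma supp_tw (hi : i ∉ supp cs v) : supp cs (tw cs i v) = insert i (supp cs v) := by
  by_cases h : v * cs.simple i = cs.simple i * v
  · rw [tw_of_comm h, supp_mul_simple hi]
  · rw [tw_of_not_comm h, supp_conj hi h]

lemma le_tw (hi : i ∉ supp cs v) : Le cs v (tw cs i v) := by
  by_cases h : v * cs.simple i = cs.simple i * v
  · rw [tw_of_comm h]; exact le_mul_simple (by rw [length_mul_of_notMem hi]; omega)
  · rw [tw_of_not_comm h]; exact le_conj hi h

/-- Twisted conjugation by a new letter is monotone. -/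
lemma tw_mono {x x' : W} (h : Le cs x x') (hi : i ∉ supp cs x') :
    Le cs (tw cs i x) (tw cs i x') := by
  have hix : i ∉ supp cs x := fun h' => hi (supp_mono h h')
  have l1 : cs.length x' < cs.length (x' * cs.simple i) := by
    rw [length_mul_of_notMem hi]; omega
  by_cases h' : x' * cs.simple i = cs.simple i * x'
  · have hx : x * cs.simple i = cs.simple i * x := by
      obtain ⟨ω, _, rfl, h3⟩ := exists_reduced cs x
      have h4 : ∀ j ∈ ω, Commute (cs.simple j) (cs.simple i) := fun j hj =>
        commute_letters x' hi h' j (supp_mono h ((h3 j).mp hj))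
      clear h3 hix h
      rename_i hred
      clear hred
      induction ω with
      | nil => simp
      | cons k ω ih =>
        rw [cs.wordProd_cons]
        exact (h4 k (by simp)).mul_left (ih (fun j hj => h4 j (by simp [hj])))
    rw [tw_of_comm h', tw_of_comm hx]
    exact h.mul_simple_of_lt l1
  · rw [tw_of_not_comm h']
    by_cases hx : x * cs.simple i = cs.simple i * x
    · rw [tw_of_comm hx, mul_assoc]
      refine (h.mul_simple_of_lt l1).trans (le_simple_mul ?_)
      rw [← mul_assoc, length_conj hi h', length_mul_of_notMem hi]; omega
    · rw [tw_of_not_comm hx]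
      refine (h.simple_mul_of_lt ?_).mul_simple_of_lt (length_lt_conj hi h')
      rw [length_simple_mul_of_notMem hi]; omega

/-- The involutions below a twisted conjugate by a new letter `i`. -/
lemma le_tw_cases {u : W} (hi : i ∉ supp cs v) (hu : u * u = 1) (h : Le cs u (tw cs i v)) :
    (i ∉ supp cs u ∧ Le cs u v) ∨ ∃ x, x * x = 1 ∧ Le cs x v ∧ u = tw cs i x := by
  obtain ⟨ω, hω, rfl, hmem⟩ := exists_reduced cs v
  -- by the subword property, `u` is some `y ≤ v`, possibly multiplied by `sᵢ` on either side
  have key : ∃ y, Le cs y (cs.wordProd ω) ∧ (u = y ∨ u = y * cs.simple i ∨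
      u = cs.simple i * y ∨ u = cs.simple i * y * cs.simple i) := by
    by_cases hc : cs.wordProd ω * cs.simple i = cs.simple i * cs.wordProd ω
    · rw [tw_of_comm hc] at h
      obtain ⟨ω', h1, rfl⟩ := h.exists_sublist (ω := ω ++ [i]) (by simp [cs.wordProd_append])
      obtain ⟨a, b, rfl, ha, hb⟩ := List.sublist_append_iff.mp h1
      refine ⟨_, le_of_sublist hω ha, ?_⟩
      rcases List.sublist_singleton.mp hb with rfl | rfl
      · left; simp
      · right; left; simp [cs.wordProd_append]
    · rw [tw_of_not_comm hc] at h
      obtain ⟨ω', h1, rfl⟩ := h.exists_sublist (ω := [i] ++ (ω ++ [i]))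
        (by simp [cs.wordProd_append, cs.wordProd_cons, mul_assoc])
      obtain ⟨c, d, rfl, hc, hd⟩ := List.sublist_append_iff.mp h1
      obtain ⟨a, b, rfl, ha, hb⟩ := List.sublist_append_iff.mp hd
      refine ⟨_, le_of_sublist hω ha, ?_⟩
      rcases List.sublist_singleton.mp hb with rfl | rfl <;>
        rcases List.sublist_singleton.mp hc with rfl | rfl <;>
        simp [cs.wordProd_append, cs.wordProd_cons, mul_assoc]
  obtain ⟨y, hy, h'⟩ := key
  have hiy : i ∉ supp cs y := fun h => hi (supp_mono hy h)
  rcases h' with rfl | rfl | rfl | rfl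
  · exact Or.inl ⟨hiy, hy⟩
  · obtain ⟨h1, h2⟩ := involution_of_mul_simple hiy hu
    exact Or.inr ⟨y, h1, hy, (tw_of_comm h2).symm⟩
  · have e : y⁻¹ * cs.simple i = (cs.simple i * y)⁻¹ := by simp
    obtain ⟨h1, h2⟩ := involution_of_mul_simple (cs := cs) (i := i) (y := y⁻¹)
      (by rwa [supp_inv]) (by rw [e, ← mul_inv_rev, hu, inv_one])
    have h3 : y⁻¹ = y := by
      rw [← mul_inv_rev, inv_eq_one] at h1
      exact (mul_eq_one_iff_inv_eq).mp h1
    rw [h3] at h2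
    rw [h3] at h1
    exact Or.inr ⟨y, h1, hy, by rw [tw_of_comm h2, h2]⟩
  · have h1 : y * y = 1 := by
      have e : y * y = cs.simple i * ((cs.simple i * y * cs.simple i) *
        (cs.simple i * y * cs.simple i)) * cs.simple i := by simp [mul_assoc]
      rw [e, hu]; simp
    by_cases hc : y * cs.simple i = cs.simple i * y
    · have : cs.simple i * y * cs.simple i = y := by rw [← hc]; simp
      rw [this]
      exact Or.inl ⟨hiy, hy⟩
    · exact Or.inr ⟨y, h1, hy, (tw_of_not_comm hc).symm⟩

/-- Below an involution without repeated letters, the Bruhat order on involutions is the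
inclusion order on supports. -/
lemma NoRepeat.le_of_supp_subset {w : W} (hw : NoRepeat cs w) :
    ∀ u u', u * u = 1 → u' * u' = 1 → Le cs u w → Le cs u' w → supp cs u ⊆ supp cs u' →
      Le cs u u' := by
  refine hw.tw_induction (P := fun w => ∀ u u', u * u = 1 → u' * u' = 1 → Le cs u w →
    Le cs u' w → supp cs u ⊆ supp cs u' → Le cs u u') ?_ ?_
  · intro u u' _ _ hu _ _
    rw [hu.eq_of_length (by simp)]
    exact one_le _
  · intro v i _ hi ih u u' hu hu' hle hle' hsub
    rcases le_tw_cases hi hu' hle' with ⟨h1, h2⟩ | ⟨x', hx', h2, rfl⟩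
    · rcases le_tw_cases hi hu hle with ⟨_, h4⟩ | ⟨x, hx, h4, rfl⟩
      · exact ih _ _ hu hu' h4 h2 hsub
      · exfalso
        have hix : i ∉ supp cs x := fun h => hi (supp_mono h4 h)
        rw [supp_tw hix] at hsub
        exact h1 (hsub (Set.mem_insert _ _))
    · have hix' : i ∉ supp cs x' := fun h => hi (supp_mono h2 h)
      rw [supp_tw hix'] at hsub
      rcases le_tw_cases hi hu hle with ⟨h3, h4⟩ | ⟨x, hx, h4, rfl⟩
      · exact (ih _ _ hu hx' h4 h2 ((Set.subset_insert_iff_of_notMem h3).mp hsub)).trans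
          (le_tw hix')
      · have hix : i ∉ supp cs x := fun h => hi (supp_mono h4 h)
        rw [supp_tw hix] at hsub
        exact tw_mono (ih _ _ hx hx' h4 h2 ((Set.insert_subset_insert_iff hix).mp hsub)) hix'

/-- Every subset of the support of an involution without repeated letters is the support of an
involution below it. -/
lemma NoRepeat.exists_supp_eq {w : W} (hw : NoRepeat cs w) :
    ∀ A : Set B, A ⊆ supp cs w → ∃ u, u * u = 1 ∧ Le cs u w ∧ supp cs u = A := by
  refine hw.tw_induction (P := fun w => ∀ A : Set B, A ⊆ supp cs w →
    ∃ u, u * u = 1 ∧ Le cs u w ∧ supp cs u = A) ?_ ?_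
  · intro A hA
    rw [supp_one, Set.subset_empty_iff] at hA
    exact ⟨1, by simp, Le.refl _, by rw [hA, supp_one]⟩
  · intro v i _ hi ih A hA
    rw [supp_tw hi] at hA
    by_cases hiA : i ∈ A
    · obtain ⟨u, h1, h2, h3⟩ := ih (A \ {i}) (by simpa using hA)
      refine ⟨tw cs i u, mul_self_tw h1, tw_mono h2 hi, ?_⟩
      rw [supp_tw (by rw [h3]; simp), h3]
      simp [Set.insert_eq_of_mem hiA]
    · obtain ⟨u, h1, h2, h3⟩ := ih A ((Set.subset_insert_iff_of_notMem hiA).mp hA)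
      exact ⟨u, h1, h2.trans (le_tw hi), h3⟩

/-- If the involutions below `w` are determined by their supports, then `w` has no repeated
letters: `w` is the twisted conjugate of a smaller involution `v` by a descent `i`, and `i` in the
support of `v` would give `v` and `w` the same support. The number `n` serves the induction on
length. -/
lemma noRepeat_of_supp_injective (n : ℕ) : ∀ w : W, cs.length w ≤ n → w * w = 1 →
    (∀ u u', u * u = 1 → u' * u' = 1 → Le cs u w → Le cs u' w → supp cs u = supp cs u' → u = u') →
    NoRepeat cs w := by
  induction n with
  | zero =>
    intro w hl _ _
    rw [cs.length_eq_zero_iff.mp (Nat.le_zero.mp hl)]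
    exact NoRepeat.one
  | succ n ih =>
    intro w hl hw hinj
    by_cases hw1 : w = 1
    · rw [hw1]; exact NoRepeat.one
    obtain ⟨i, hi⟩ := cs.exists_rightDescent_of_ne_one hw1
    have hi : cs.length (w * cs.simple i) < cs.length w := hi
    have hle : Le cs (w * cs.simple i) w := mul_simple_le hi
    have hwinv : w⁻¹ = w := (mul_eq_one_iff_inv_eq).mp hw
    -- it suffices to find `v` with `w = tw i v`
    have key : ∀ v, v * v = 1 → Le cs v w → cs.length v < cs.length w → w = tw cs i v →
        supp cs w ⊆ insert i (supp cs v) → NoRepeat cs w := by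
      intro v hv hvw hlv hwv hs
      have hNR := ih v (by omega) hv (fun u u' a b c d => hinj u u' a b (c.trans hvw) (d.trans hvw))
      have hiv : i ∉ supp cs v := by
        intro h
        rw [Set.insert_eq_of_mem h] at hs
        have := hinj v w hv hw hvw (Le.refl _) (Set.Subset.antisymm (supp_mono hvw) hs)
        rw [this] at hlv
        omega
      rw [hwv]
      exact hNR.tw_step hiv
    by_cases hc : w * cs.simple i = cs.simple i * w
    · have hc' : w * cs.simple i * cs.simple i = cs.simple i * (w * cs.simple i) := by
        rw [← mul_assoc, ← hc]
      refine key (w * cs.simple i) (mul_self_of_comm hw hc) hle hi ?_ ?_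
      · rw [tw_of_comm hc']; simp
      · have := supp_mul (cs := cs) (w * cs.simple i) (cs.simple i)
        rw [cs.simple_mul_simple_cancel_right, supp_simple, Set.union_singleton] at this
        exact this
    · have hle' : Le cs (cs.simple i * w) w := by
        have := hle.inv
        rwa [mul_inv_rev, cs.inv_simple, hwinv] at this
      have hl' : cs.length (cs.simple i * w) < cs.length w := by
        rw [← cs.length_inv, mul_inv_rev, cs.inv_simple, hwinv]; exact hi
      have hne : cs.simple i * w * cs.simple i ≠ w := by
        intro h
        apply hc
        conv_lhs => rw [← h]
        simp [mul_assoc]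
      have hlt : cs.length (cs.simple i * w * cs.simple i) < cs.length (cs.simple i * w) := by
        rcases cs.length_mul_simple (cs.simple i * w) i with h | h
        · exfalso
          -- by lifting, `sᵢ w sᵢ` lies below `w`, hence equals it, or below the shorter `w sᵢ`
          have h3 := cs.length_simple_mul w i
          rcases hle'.mul_simple i with h2 | h2
          · exact hne (h2.eq_of_length (by omega))
          · have := h2.length_le
            omega
        · omega
      refine key (cs.simple i * w * cs.simple i) (mul_self_conj hw)
        ((mul_simple_le hlt).trans hle') (by omega) ?_ ?_
      · rw [tw_of_not_comm]
        · simp [mul_assoc]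
        · intro h
          apply hc
          simp only [mul_assoc, cs.simple_mul_simple_self, mul_one,
            cs.simple_mul_simple_cancel_left] at h
          exact h.symm
      · have e : w = cs.simple i * (cs.simple i * w * cs.simple i) * cs.simple i := by
          simp [mul_assoc]
        conv_lhs => rw [e]
        refine supp_mul_subset (supp_mul_subset ?_ (Set.subset_insert _ _)) ?_ <;>
        · rw [supp_simple]; simp

end Twisted

end BoolInv

namespace BoolInv

/-! ### Standard parabolic subgroups -/

section Parabolic

variable {B W : Type*} [Group W] {M : CoxeterMatrix B} {cs : CoxeterSystem M W}

/-- A list of generators comes from a word. -/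
lemma exists_word {J : Set B} {l : List W} (h : ∀ t ∈ l, t ∈ cs.simple '' J) :
    ∃ ω : List B, (∀ i ∈ ω, i ∈ J) ∧ l = ω.map cs.simple := by
  induction l with
  | nil => exact ⟨[], by simp, by simp⟩
  | cons t l ih =>
    obtain ⟨ω, h1, rfl⟩ := ih (fun t ht => h t (List.mem_cons_of_mem _ ht))
    obtain ⟨i, hi, rfl⟩ := h t List.mem_cons_self
    refine ⟨i :: ω, ?_, by simp⟩
    intro j hj
    rcases List.mem_cons.mp hj with rfl | hj
    · exact hi
    · exact h1 j hj

variable [Fintype B] [DecidableEq B] {J : Set B}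

/-- A standard parabolic subgroup consists of the elements whose support lies in its letters. -/
lemma mem_closure_iff {w : W} :
    w ∈ Subgroup.closure (cs.simple '' J) ↔ supp cs w ⊆ J := by
  constructor
  · intro h
    induction h using Subgroup.closure_induction with
    | mem x hx =>
      obtain ⟨i, hi, rfl⟩ := hx
      rw [supp_simple]
      exact Set.singleton_subset_iff.mpr hi
    | one => rw [supp_one]; exact Set.empty_subset _
    | mul x y _ _ hx hy => exact supp_mul_subset hx hy
    | inv x _ hx => rwa [supp_inv]
  · intro h
    obtain ⟨ω, _, rfl, h2⟩ := exists_reduced cs w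
    refine Subgroup.list_prod_mem _ ?_
    intro t ht
    obtain ⟨i, hi, rfl⟩ := List.mem_map.mp ht
    exact Subgroup.subset_closure ⟨i, h ((h2 i).mp hi), rfl⟩

lemma glen_eq {w : W} (h : supp cs w ⊆ J) : glen (cs.simple '' J) w = cs.length w := by
  obtain ⟨ω, h1, h2, h3⟩ := exists_reduced cs w
  have hmem : ω.length ∈ {k : ℕ | ∃ l : List W, (∀ t ∈ l, t ∈ cs.simple '' J) ∧
      l.length = k ∧ l.prod = w} := by
    refine ⟨ω.map cs.simple, ?_, by simp, h2⟩
    intro t ht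
    obtain ⟨i, hi, rfl⟩ := List.mem_map.mp ht
    exact ⟨i, h ((h3 i).mp hi), rfl⟩
  have hl : cs.length w = ω.length := by rw [← h2]; exact h1
  rw [hl]
  refine le_antisymm (Nat.sInf_le hmem) (le_csInf ⟨_, hmem⟩ ?_)
  rintro k ⟨l, hl1, rfl, hl2⟩
  obtain ⟨ω', _, rfl⟩ := exists_word hl1
  have : cs.wordProd ω' = w := hl2
  rw [← hl, ← this, List.length_map]
  exact cs.length_wordProd_le _

lemma isReflection_of_gen {t : W} (h : IsGenReflection (cs.simple '' J) t) :
    cs.IsReflection t ∧ supp cs t ⊆ J := by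
  obtain ⟨x, hx, _, ⟨i, hi, rfl⟩, rfl⟩ := h
  refine ⟨⟨x, i, rfl⟩, ?_⟩
  rw [mem_closure_iff] at hx
  refine supp_mul_subset (supp_mul_subset hx ?_) (by rwa [supp_inv])
  rw [supp_simple]
  exact Set.singleton_subset_iff.mpr hi

/-- Edges of the Bruhat graph inside a parabolic subgroup come from reflections of that
subgroup: by strong exchange the reflection is a palindrome in the letters of the upper end. -/
lemma isGenReflection_of_step {u v t : W} (ht : cs.IsReflection t) (h : v = u * t)
    (hl : cs.length u < cs.length v) (hv : supp cs v ⊆ J) :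
    IsGenReflection (cs.simple '' J) t := by
  obtain ⟨ω, _, h2, h3⟩ := exists_reduced cs v
  have e : v * t = u := by rw [h, mul_assoc, ht.mul_self, mul_one]
  obtain ⟨j, hj, he⟩ := strong_exchange cs ht ω (by rw [h2, e]; exact hl)
  have hsplit : ω = ω.take j ++ ([ω[j]] ++ ω.drop (j + 1)) := by
    simp
  have hJ : supp cs (cs.wordProd (ω.drop (j + 1))) ⊆ J := by
    refine supp_wordProd_subset (fun i hi => hv ((h3 i).mp (List.drop_subset _ _ hi)))
  refine ⟨(cs.wordProd (ω.drop (j + 1)))⁻¹, ?_, cs.simple ω[j],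
    ⟨_, hv ((h3 _).mp (List.getElem_mem hj)), rfl⟩, ?_⟩
  · exact inv_mem (mem_closure_iff.mpr hJ)
  · rw [List.eraseIdx_eq_take_drop_succ, cs.wordProd_append] at he
    have h4 : cs.wordProd ω = cs.wordProd (ω.take j) * (cs.simple ω[j] *
        cs.wordProd (ω.drop (j + 1))) := by
      conv_lhs => rw [hsplit]
      rw [cs.wordProd_append, cs.wordProd_append, cs.wordProd_singleton]
    rw [h4, mul_assoc, mul_right_inj] at he
    rw [inv_inv, mul_assoc, eq_inv_mul_iff_mul_eq]
    conv_rhs => rw [← he]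
    simp [mul_assoc]

lemma le_of_genBruhatLE {u w : W} (hu : supp cs u ⊆ J)
    (h : genBruhatLE (cs.simple '' J) u w) : Le cs u w := by
  obtain ⟨ts, h1, rfl, h3⟩ := h
  induction ts generalizing u with
  | nil => exact Le.refl _
  | cons t ts ih =>
    have ht := isReflection_of_gen (h1 t List.mem_cons_self)
    have hut : supp cs (u * t) ⊆ J := supp_mul_subset hu ht.2
    refine Le.trans (Step.le ⟨t, ht.1, rfl, ?_⟩) (ih hut
      (fun t ht => h1 t (List.mem_cons_of_mem _ ht)) ?_)
    · have := h3 0 (by simp)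
      simpa [glen_eq hu, glen_eq hut] using this
    · intro k hk
      exact h3 (k + 1) (by simpa using hk)

lemma genBruhatLE_of_le {u w : W} (hw : supp cs w ⊆ J) (h : Le cs u w) :
    genBruhatLE (cs.simple '' J) u w := by
  induction h using Relation.ReflTransGen.head_induction_on with
  | refl => exact ⟨[], by simp, rfl, by simp⟩
  | @head u v hs hle ih =>
    have hv : supp cs v ⊆ J := (supp_mono hle).trans hw
    have hu : supp cs u ⊆ J := (supp_mono hs.le).trans hv
    obtain ⟨t, ht, rfl, hl⟩ := hs
    obtain ⟨ts, h1, h2, h3⟩ := ih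
    refine ⟨t :: ts, ?_, h2, ?_⟩
    · intro t' ht'
      rcases List.mem_cons.mp ht' with rfl | ht'
      · exact isGenReflection_of_step ht rfl hl hv
      · exact h1 _ ht'
    · intro k hk
      rcases k with _ | k
      · simpa [glen_eq hu, glen_eq hv] using hl
      · exact h3 k (by simpa using hk)

lemma genBruhatLE_iff {u w : W} (hu : supp cs u ⊆ J) (hw : supp cs w ⊆ J) :
    genBruhatLE (cs.simple '' J) u w ↔ Le cs u w :=
  ⟨le_of_genBruhatLE hu, genBruhatLE_of_le hw⟩

/-- Boolean involutions are exactly those without repeated letters. In a Boolean interval the atoms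
are simple reflections, so an involution in it is determined by its support; conversely the support
is an isomorphism from the interval below `w` to the subsets of `supp w`. -/
lemma genBoolean_iff {w : W} (hw : supp cs w ⊆ J) (hinv : w * w = 1) :
    genBoolean (cs.simple '' J) w ↔ NoRepeat cs w := by
  classical
  have hmem : ∀ u, (u ∈ Subgroup.closure (cs.simple '' J) ∧ u * u = 1 ∧
      genBruhatLE (cs.simple '' J) u w) ↔ (u * u = 1 ∧ Le cs u w) := by
    intro u
    rw [mem_closure_iff]
    constructor
    · rintro ⟨h1, h2, h3⟩
      exact ⟨h2, le_of_genBruhatLE h1 h3⟩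
    · rintro ⟨h1, h2⟩
      exact ⟨(supp_mono h2).trans hw, h1, genBruhatLE_of_le hw h2⟩
  have hJ : ∀ u : {u : W // u ∈ Subgroup.closure (cs.simple '' J) ∧ u * u = 1 ∧
      genBruhatLE (cs.simple '' J) u w}, supp cs u.1 ⊆ J := fun u => mem_closure_iff.mp u.2.1
  constructor
  · rintro ⟨m, f, hf⟩
    replace hf : ∀ a b, Le cs a.1 b.1 ↔ f a ⊆ f b := fun a b => by
      rw [← hf, genBruhatLE_iff (hJ a) (hJ b)]
    -- an element over an atom `{k}` is a simple reflection
    have hatom : ∀ k, ∃ i, (f.symm {k}).1 = cs.simple i := by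
      intro k
      have hne : (f.symm {k}).1 ≠ 1 := by
        intro h
        have h1 := (hf (f.symm {k}) (f.symm ∅)).mp (by rw [h]; exact one_le _)
        simp at h1
      obtain ⟨ω, h1, h2, h3⟩ := exists_reduced cs (f.symm {k}).1
      rcases ω with _ | ⟨i, ω⟩
      · exact absurd (by simpa using h2.symm) hne
      · refine ⟨i, ?_⟩
        have hi : Le cs (cs.simple i) (f.symm {k}).1 := (h3 i).mp (by simp)
        let a : {u : W // u ∈ Subgroup.closure (cs.simple '' J) ∧ u * u = 1 ∧
          genBruhatLE (cs.simple '' J) u w} := ⟨cs.simple i, (hmem _).mpr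
            ⟨by simp, hi.trans ((hmem _).mp (f.symm {k}).2).2⟩⟩
        have h4 := (hf a (f.symm {k})).mp hi
        rw [Equiv.apply_symm_apply, Finset.subset_singleton_iff] at h4
        rcases h4 with h4 | h4
        · exfalso
          have h5 := (hf a (f.symm ∅)).mpr (by rw [h4]; simp)
          have h6 := (hf (f.symm ∅) ⟨1, (hmem _).mpr ⟨by simp, one_le _⟩⟩).mpr (by simp)
          have h7 := (h5.trans h6).length_le
          simp [a] at h7
        · rw [← h4, Equiv.symm_apply_apply]
    have hsub : ∀ a b, supp cs a.1 ⊆ supp cs b.1 → f a ⊆ f b := by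
      intro a b h k hk
      obtain ⟨i, hi⟩ := hatom k
      have h1 := (hf (f.symm {k}) a).mpr (by simpa using hk)
      rw [hi] at h1
      have h2 : Le cs (f.symm {k}).1 b.1 := by
        rw [hi]
        exact h h1
      simpa using (hf _ _).mp h2
    refine noRepeat_of_supp_injective _ w le_rfl hinv ?_
    intro u u' hu hu' hle hle' hs
    have h1 := hsub ⟨u, (hmem u).mpr ⟨hu, hle⟩⟩ ⟨u', (hmem u').mpr ⟨hu', hle'⟩⟩ hs.le
    have h2 := hsub ⟨u', (hmem u').mpr ⟨hu', hle'⟩⟩ ⟨u, (hmem u).mpr ⟨hu, hle⟩⟩ hs.ge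
    exact congrArg Subtype.val (f.injective (Finset.Subset.antisymm h1 h2))
  · intro hNR
    let e := Fintype.equivFin (supp cs w)
    have key : ∀ u u', Le cs u w → (supp cs u ⊆ supp cs u' ↔
        (Finset.univ.filter fun k => (e.symm k : B) ∈ supp cs u) ⊆
        (Finset.univ.filter fun k => (e.symm k : B) ∈ supp cs u')) := by
      intro u u' hu
      constructor
      · intro h k
        simpa using fun hk => h hk
      · intro h i hi
        have := @h (e ⟨i, supp_mono hu hi⟩) (by simpa using hi)
        simpa using this
    have hle : ∀ a b : {u : W // u ∈ Subgroup.closure (cs.simple '' J) ∧ u * u = 1 ∧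
        genBruhatLE (cs.simple '' J) u w}, Le cs a.1 b.1 ↔ supp cs a.1 ⊆ supp cs b.1 :=
      fun a b => ⟨supp_mono, hNR.le_of_supp_subset _ _ a.2.2.1 b.2.2.1
        ((hmem _).mp a.2).2 ((hmem _).mp b.2).2⟩
    have hord : ∀ a b : {u : W // u ∈ Subgroup.closure (cs.simple '' J) ∧ u * u = 1 ∧
        genBruhatLE (cs.simple '' J) u w}, Le cs a.1 b.1 ↔
        (Finset.univ.filter fun k => (e.symm k : B) ∈ supp cs a.1) ⊆
        (Finset.univ.filter fun k => (e.symm k : B) ∈ supp cs b.1) :=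
      fun a b => (hle a b).trans (key _ _ ((hmem _).mp a.2).2)
    refine ⟨_, Equiv.ofBijective (fun u => Finset.univ.filter fun k =>
      (e.symm k : B) ∈ supp cs u.1) ⟨?_, ?_⟩, ?_⟩
    · intro a b hab
      exact Subtype.ext (((hord a b).mpr hab.le).antisymm ((hord b a).mpr hab.ge))
    · intro A
      obtain ⟨u, h1, h2, h3⟩ := hNR.exists_supp_eq (fun i => i ∈ A.image fun k => (e.symm k : B))
        (by
          intro i hi
          obtain ⟨k, _, rfl⟩ := Finset.mem_image.mp hi
          exact (e.symm k).2)
      refine ⟨⟨u, (hmem u).mpr ⟨h1, h2⟩⟩, ?_⟩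
      ext k
      simp only [Finset.mem_filter, Finset.mem_univ, true_and, h3]
      change (e.symm k : B) ∈ A.image _ ↔ _
      simp [Subtype.val_inj]
    · intro a b
      rw [genBruhatLE_iff (hJ a) (hJ b), hord]
      rfl

/-! ### Absolute length -/

/-- A new letter commuting with `v` raises the rank of `ρ(v) - 1` by one. -/
lemma moved_mul_of_comm {v : W} {i : B} (hi : i ∉ supp cs v)
    (h : v * cs.simple i = cs.simple i * v) :
    moved cs (v * cs.simple i) = moved cs v + 1 := by
  obtain ⟨ω, _, h2, h3⟩ := exists_reduced cs v
  have h4 := moved_mul_simple cs (i := i) (ω := ω) (fun h => hi ((h3 i).mp h))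
    (fun j hj => commute_letters v hi h j ((h3 j).mp hj))
  rw [h2] at h4
  have h5 := moved_mul_le cs v (cs.simple i)
  have h6 := moved_reflection_le cs (cs.isReflection_simple i)
  omega

lemma moved_conj_simple (v : W) (i : B) :
    moved cs (cs.simple i * v * cs.simple i) = moved cs v := by
  simpa using moved_conj cs (cs.simple i) v

/-- An involution without repeated letters is a product of as many reflections as the rank of
`ρ(w) - 1`: a commuting letter adds one reflection, a conjugation none. -/
lemma NoRepeat.exists_reflections {w : W} (h : NoRepeat cs w) (hJ : supp cs w ⊆ J) :
    ∃ ts : List W, (∀ t ∈ ts, IsGenReflection (cs.simple '' J) t) ∧ ts.length = moved cs w ∧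
      ts.prod = w := by
  induction h with
  | one => exact ⟨[], by simp, by simp [moved_one], by simp⟩
  | @comm v i _ hi hc ih =>
    rw [supp_mul_simple hi, Set.insert_subset_iff] at hJ
    obtain ⟨ts, h1, h2, h3⟩ := ih hJ.2
    refine ⟨ts ++ [cs.simple i], ?_, ?_, by simp [h3]⟩
    · intro t ht
      rcases List.mem_append.mp ht with ht | ht
      · exact h1 t ht
      · rw [List.mem_singleton.mp ht]
        exact ⟨1, one_mem _, cs.simple i, ⟨i, hJ.1, rfl⟩, by simp⟩
    · rw [moved_mul_of_comm hi hc, ← h2]; simp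
  | @conj v i _ hi hc ih =>
    rw [supp_conj hi hc, Set.insert_subset_iff] at hJ
    obtain ⟨ts, h1, h2, h3⟩ := ih hJ.2
    refine ⟨ts.map (MulAut.conj (cs.simple i)), ?_, ?_, ?_⟩
    · intro t ht
      obtain ⟨t', ht', rfl⟩ := List.mem_map.mp ht
      obtain ⟨x, hx, s, hs, rfl⟩ := h1 t' ht'
      exact ⟨cs.simple i * x, mul_mem (Subgroup.subset_closure ⟨i, hJ.1, rfl⟩) hx, s, hs,
        by simp [mul_assoc]⟩
    · rw [moved_conj_simple, ← h2]; simp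
    · rw [← map_list_prod, h3]; simp

/-- On involutions without repeated letters the absolute length is the rank of `ρ(w) - 1` in the
geometric representation, since each reflection contributes at most one to that rank. -/
lemma alen_eq {w : W} (h : NoRepeat cs w) (hJ : supp cs w ⊆ J) :
    alen (cs.simple '' J) w = moved cs w := by
  have hmem := h.exists_reflections hJ
  refine le_antisymm (Nat.sInf_le hmem) (le_csInf ⟨_, hmem⟩ ?_)
  rintro k ⟨ts, h1, rfl, rfl⟩
  exact moved_prod_le cs (fun t ht => (isReflection_of_gen (h1 t ht)).1)

variable (cs J) in
/-- The elements without repeated letters, with letters in `J`, of length `l`, moving an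
`a`-dimensional space. -/
def NRSet (l a : ℕ) : Set W :=
  {w | supp cs w ⊆ J ∧ NoRepeat cs w ∧ cs.length w = l ∧ moved cs w = a}

lemma fCount_eq (l a : ℕ) : fCount (cs.simple '' J) l a = (NRSet cs J l a).ncard := by
  unfold fCount NRSet
  congr 1
  ext w
  simp only [Set.mem_ofPred_eq, mem_closure_iff]
  constructor
  · rintro ⟨h1, h2, h3, h4, h5⟩
    have hN := (genBoolean_iff h1 h2).mp h3
    exact ⟨h1, hN, by rw [← h4, glen_eq h1], by rw [← h5, alen_eq hN h1]⟩
  · rintro ⟨h1, h2, h3, h4⟩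
    exact ⟨h1, h2.mul_self, (genBoolean_iff h1 h2.mul_self).mpr h2, by rw [glen_eq h1, h3],
      by rw [alen_eq h2 h1, h4]⟩

lemma finite_NRSet (l a : ℕ) : (NRSet cs J l a).Finite := by
  refine ((List.finite_length_eq B l).image cs.wordProd).subset ?_
  rintro w ⟨_, _, h, _⟩
  obtain ⟨ω, h1, rfl⟩ := cs.exists_isReduced w
  exact ⟨ω, by rw [← h]; exact h1.symm, rfl⟩

end Parabolic

end BoolInv

namespace BoolInv

/-! ### The recursion -/

section Recursion

variable {B W : Type*} [Group W] {M : CoxeterMatrix B} {cs : CoxeterSystem M W}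

/-- Twisted conjugation by `s_q` leaves alone a right factor `s_p` commuting with `s_q`. -/
lemma tw_mul_simple {p q : B} (h : cs.simple q * cs.simple p = cs.simple p * cs.simple q) (x : W) :
    tw cs q (x * cs.simple p) = tw cs q x * cs.simple p := by
  have e : x * cs.simple p * cs.simple q = x * cs.simple q * cs.simple p := by
    rw [mul_assoc, ← h, mul_assoc]
  by_cases hx : x * cs.simple q = cs.simple q * x
  · rw [tw_of_comm hx, tw_of_comm, e]
    rw [e, hx, mul_assoc]
  · rw [tw_of_not_comm hx, tw_of_not_comm]
    · rw [← mul_assoc, mul_assoc (cs.simple q * x), ← h, mul_assoc (cs.simple q * x)]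
    · rw [e, ← mul_assoc]
      exact fun hc => hx (mul_right_cancel hc)

/-- Twisted conjugation by `s_q` passes inside a conjugation by `s_p` commuting with `s_q`. -/
lemma tw_conj_simple {p q : B} (h : cs.simple q * cs.simple p = cs.simple p * cs.simple q)
    (x : W) :
    tw cs q (cs.simple p * x * cs.simple p) = cs.simple p * tw cs q x * cs.simple p := by
  rw [tw_mul_simple h, mul_left_inj]
  have e : cs.simple q * (cs.simple p * x) = cs.simple p * (cs.simple q * x) := by
    rw [← mul_assoc, h, mul_assoc]
  by_cases hx : x * cs.simple q = cs.simple q * x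
  · rw [tw_of_comm hx, tw_of_comm, mul_assoc]
    rw [e, mul_assoc, hx]
  · rw [tw_of_not_comm hx, tw_of_not_comm]
    · rw [e]; simp only [mul_assoc]
    · rw [e, mul_assoc]
      exact fun h' => hx (mul_left_cancel h')

variable (cs) in
/-- The letters `i`, `j`, `k` form a tail attached to `J`: the letter `i` commutes with all letters
of `J ∪ {k}`, the letter `j` with all letters of `J`, the pairs `i, j` and `j, k` do not commute,
and `i, j` satisfy the braid relation of length three. -/
structure Tail (J : Set B) (i j k : B) : Prop where
  hij : i ≠ j
  hiJ : i ∉ insert k J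
  hjJ : j ∉ insert k J
  hkJ : k ∉ J
  comm_i : ∀ b ∈ insert k J, cs.simple b * cs.simple i = cs.simple i * cs.simple b
  comm_j : ∀ b ∈ J, cs.simple b * cs.simple j = cs.simple j * cs.simple b
  not_comm_ij : cs.simple i * cs.simple j ≠ cs.simple j * cs.simple i
  not_comm_jk : cs.simple k * cs.simple j ≠ cs.simple j * cs.simple k
  braid : cs.simple j * cs.simple i * cs.simple j = cs.simple i * cs.simple j * cs.simple i

namespace Tail

variable {J : Set B} {i j k : B} (T : Tail cs J i j k)
include T

lemma notMem_i {x : W} (hx : supp cs x ⊆ insert k J) : i ∉ supp cs x := fun h => T.hiJ (hx h)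

lemma notMem_i' {x : W} (hx : supp cs x ⊆ insert j (insert k J)) : i ∉ supp cs x := fun h =>
  (hx h).elim T.hij T.hiJ

lemma notMem_j {x : W} (hx : supp cs x ⊆ insert k J) : j ∉ supp cs x := fun h => T.hjJ (hx h)

end Tail

variable [Fintype B] [DecidableEq B]

lemma NRSet_mono {J K : Set B} (h : J ⊆ K) (l a : ℕ) : NRSet cs J l a ⊆ NRSet cs K l a :=
  fun _ hw => ⟨hw.1.trans h, hw.2⟩

lemma comm_of_supp {x : W} {i : B}
    (h : ∀ b ∈ supp cs x, cs.simple b * cs.simple i = cs.simple i * cs.simple b) :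
    x * cs.simple i = cs.simple i * x := by
  obtain ⟨ω, _, rfl, h3⟩ := exists_reduced cs x
  have h4 : ∀ j ∈ ω, Commute (cs.simple j) (cs.simple i) := fun j hj => h j ((h3 j).mp hj)
  exact Commute.list_prod_left _ _ (fun y hy => by
    obtain ⟨j, hj, rfl⟩ := List.mem_map.mp hy
    exact h4 j hj)

namespace Tail

variable {J : Set B} {i j k : B} (T : Tail cs J i j k)
include T

lemma comm_i_of {x : W} (hx : supp cs x ⊆ insert k J) : x * cs.simple i = cs.simple i * x :=
  comm_of_supp fun b hb => T.comm_i b (hx hb)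

lemma not_comm_i_of {x : W} (hi : i ∉ supp cs x) (hj : j ∈ supp cs x) :
    x * cs.simple i ≠ cs.simple i * x := fun h =>
  T.not_comm_ij (commute_letters x hi h j hj).symm

lemma not_comm_j_of_i {x : W} (hj : j ∉ supp cs x) (hi : i ∈ supp cs x) :
    x * cs.simple j ≠ cs.simple j * x := fun h => T.not_comm_ij (commute_letters x hj h i hi)

lemma not_comm_j_of_k {x : W} (hj : j ∉ supp cs x) (hk : k ∈ supp cs x) :
    x * cs.simple j ≠ cs.simple j * x := fun h => T.not_comm_jk (commute_letters x hj h k hk)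

lemma supp_mul_i {x : W} (hx : supp cs x ⊆ insert k J) :
    supp cs (x * cs.simple i) = insert i (supp cs x) := supp_mul_simple (T.notMem_i hx)

lemma notMem_j_mul_i {x : W} (hx : supp cs x ⊆ insert k J) : j ∉ supp cs (x * cs.simple i) := by
  rw [T.supp_mul_i hx]
  rintro (h | h)
  · exact T.hij h.symm
  · exact T.notMem_j hx h

lemma not_comm_mul_i {x : W} (hx : supp cs x ⊆ insert k J) :
    (x * cs.simple i) * cs.simple j ≠ cs.simple j * (x * cs.simple i) :=
  T.not_comm_j_of_i (T.notMem_j_mul_i hx) (by rw [T.supp_mul_i hx]; exact Set.mem_insert _ _)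

lemma supp_third {x : W} (hx : supp cs x ⊆ insert k J) :
    supp cs (cs.simple j * (x * cs.simple i) * cs.simple j) =
      insert j (insert i (supp cs x)) := by
  rw [supp_conj (T.notMem_j_mul_i hx) (T.not_comm_mul_i hx), T.supp_mul_i hx]

/-- The three shapes of an involution without repeated letters that involves the letter `i`:
`v sᵢ` with `v` avoiding `i` and `j`; `sᵢ v sᵢ` with `v` involving `j`; and `sⱼ x sᵢ sⱼ` with `x`
involving `k`. By induction along the twisted conjugations producing `w`: a letter other than `i`
and `j` is absorbed into `v` or `x`. -/
lemma shapes {w : W} (hw : NoRepeat cs w) :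
    supp cs w ⊆ insert i (insert j (insert k J)) → i ∈ supp cs w →
      (∃ v, NoRepeat cs v ∧ supp cs v ⊆ insert k J ∧ w = v * cs.simple i) ∨
      (∃ v, NoRepeat cs v ∧ supp cs v ⊆ insert j (insert k J) ∧ j ∈ supp cs v ∧
        w = cs.simple i * v * cs.simple i) ∨
      (∃ x, NoRepeat cs x ∧ supp cs x ⊆ insert k J ∧ k ∈ supp cs x ∧
        w = cs.simple j * (x * cs.simple i) * cs.simple j) := by
  refine hw.tw_induction (P := fun w => supp cs w ⊆ insert i (insert j (insert k J)) →
      i ∈ supp cs w →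
      (∃ v, NoRepeat cs v ∧ supp cs v ⊆ insert k J ∧ w = v * cs.simple i) ∨
      (∃ v, NoRepeat cs v ∧ supp cs v ⊆ insert j (insert k J) ∧ j ∈ supp cs v ∧
        w = cs.simple i * v * cs.simple i) ∨
      (∃ x, NoRepeat cs x ∧ supp cs x ⊆ insert k J ∧ k ∈ supp cs x ∧
        w = cs.simple j * (x * cs.simple i) * cs.simple j)) ?_ ?_
  · intro _ h
    rw [supp_one] at h
    exact h.elim
  · intro v q hv hq ih hs hi
    rw [supp_tw hq] at hs hi
    rw [Set.insert_subset_iff] at hs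
    by_cases hqi : q = i
    · subst hqi
      have hv2 : supp cs v ⊆ insert j (insert k J) :=
        (Set.subset_insert_iff_of_notMem hq).mp hs.2
      by_cases hj : j ∈ supp cs v
      · exact Or.inr (Or.inl ⟨v, hv, hv2, hj, tw_of_not_comm (T.not_comm_i_of hq hj)⟩)
      · have hv1 := (Set.subset_insert_iff_of_notMem hj).mp hv2
        exact Or.inl ⟨v, hv, hv1, tw_of_comm (T.comm_i_of hv1)⟩
    · have hiv : i ∈ supp cs v := hi.resolve_left (fun h => hqi h.symm)
      have hq2 : q ∈ insert j (insert k J) := hs.1.resolve_left hqi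
      rcases ih hs.2 hiv with ⟨x, hx, hx1, rfl⟩ | ⟨y, hy, hy2, hjy, rfl⟩ | ⟨x, hx, hx1, hk, rfl⟩
      · rw [T.supp_mul_i hx1, Set.mem_insert_iff, not_or] at hq
        by_cases hqj : q = j
        · subst hqj
          rw [tw_of_not_comm (T.not_comm_mul_i hx1)]
          by_cases hk : k ∈ supp cs x
          · exact Or.inr (Or.inr ⟨x, hx, hx1, hk, rfl⟩)
          · -- here `sⱼ` commutes with `x`, and the braid relation gives `sⱼ x sᵢ sⱼ = sᵢ x sⱼ sᵢ`
            have hx0 := (Set.subset_insert_iff_of_notMem hk).mp hx1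
            have hc := comm_of_supp fun b hb => T.comm_j b (hx0 hb)
            refine Or.inr (Or.inl ⟨x * cs.simple q, hx.comm hq.2 hc, ?_, ?_, ?_⟩)
            · rw [supp_mul_simple hq.2]
              exact Set.insert_subset_insert hx1
            · exact mem_supp_mul hq.2
            · rw [← mul_assoc, ← hc, ← mul_assoc, ← T.comm_i_of hx1]
              have := T.braid
              simp only [mul_assoc] at this ⊢
              rw [this]
        · have hq1 := hq2.resolve_left hqj
          rw [tw_mul_simple (T.comm_i q hq1)]
          refine Or.inl ⟨_, hx.tw_step hq.2, ?_, rfl⟩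
          rw [supp_tw hq.2]
          exact Set.insert_subset hq1 hx1
      · have hiy := T.notMem_i' hy2
        rw [supp_conj hiy (T.not_comm_i_of hiy hjy), Set.mem_insert_iff, not_or] at hq
        have hqj : q ≠ j := fun h => hq.2 (h ▸ hjy)
        rw [tw_conj_simple (T.comm_i q (hq2.resolve_left hqj))]
        refine Or.inr (Or.inl ⟨_, hy.tw_step hq.2, ?_, ?_, rfl⟩)
        · rw [supp_tw hq.2]
          exact Set.insert_subset hq2 hy2
        · rw [supp_tw hq.2]
          exact Set.mem_insert_of_mem _ hjy
      · rw [T.supp_third hx1, Set.mem_insert_iff, Set.mem_insert_iff, not_or, not_or] at hq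
        have hq1 := hq2.resolve_left hq.1
        have hq0 := hq1.resolve_left (fun h => hq.2.2 (h ▸ hk))
        rw [tw_conj_simple (T.comm_j q hq0), tw_mul_simple (T.comm_i q hq1)]
        refine Or.inr (Or.inr ⟨_, hx.tw_step hq.2.2, ?_, ?_, rfl⟩)
        · rw [supp_tw hq.2.2]
          exact Set.insert_subset hq1 hx1
        · rw [supp_tw hq.2.2]
          exact Set.mem_insert_of_mem _ hk

/-- The second and third shapes are disjoint. -/
lemma second_ne_third {v x : W} (hv : supp cs v ⊆ insert j (insert k J))
    (hx : supp cs x ⊆ insert k J) (hk : k ∈ supp cs x) :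
    cs.simple i * v * cs.simple i ≠ cs.simple j * (x * cs.simple i) * cs.simple j := by
  intro h
  have hjx := T.notMem_j hx
  have hs : supp cs (cs.simple j * x * cs.simple j) = insert j (supp cs x) :=
    supp_conj hjx (T.not_comm_j_of_k hjx hk)
  have hi : i ∉ supp cs (cs.simple j * x * cs.simple j) :=
    T.notMem_i' (by rw [hs]; exact Set.insert_subset_insert hx)
  -- with `y = sⱼ x sⱼ`, the braid relation turns the equality into `sᵢ y sᵢ = v sⱼ`
  have e : cs.simple i * (cs.simple j * x * cs.simple j) * cs.simple i = v * cs.simple j := by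
    have h1 : v = cs.simple i * (cs.simple j * (x * cs.simple i) * cs.simple j) * cs.simple i := by
      rw [← h]; simp [mul_assoc]
    have h2 : cs.simple i * cs.simple j * cs.simple i * cs.simple j =
        cs.simple j * cs.simple i := by
      rw [← T.braid]; simp [mul_assoc]
    rw [h1]
    simp only [mul_assoc] at h2 ⊢
    rw [h2]
  have h3 := conj_eq_of_notMem hi (by
    rw [e]
    refine T.notMem_i' (supp_mul_subset hv ?_)
    rw [supp_simple]
    simp)
  refine T.not_comm_i_of hi (by rw [hs]; exact Set.mem_insert _ _) ?_
  conv_lhs => rw [← h3]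
  simp

/-- The involutions without repeated letters, sorted by shape. The first part collects those that
avoid `i`. -/
lemma NRSet_eq {l a : ℕ} (hl : 3 ≤ l) (ha : 1 ≤ a) :
    NRSet cs (insert i (insert j (insert k J))) l a =
      NRSet cs (insert j (insert k J)) l a ∪
      ((fun v => v * cs.simple i) '' NRSet cs (insert k J) (l - 1) (a - 1) ∪
      ((fun v => cs.simple i * v * cs.simple i) ''
        (NRSet cs (insert j (insert k J)) (l - 2) a \ NRSet cs (insert k J) (l - 2) a) ∪
      (fun x => cs.simple j * (x * cs.simple i) * cs.simple j) ''
        (NRSet cs (insert k J) (l - 3) (a - 1) \ NRSet cs J (l - 3) (a - 1)))) := by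
  ext w
  constructor
  · rintro ⟨h1, h2, h3, h4⟩
    by_cases hi : i ∈ supp cs w
    · right
      rcases T.shapes h2 h1 hi with ⟨v, hv, hv1, rfl⟩ | ⟨v, hv, hv2, hj, rfl⟩ |
        ⟨x, hx, hx1, hk, rfl⟩
      · left
        rw [length_mul_of_notMem (T.notMem_i hv1)] at h3
        rw [moved_mul_of_comm (T.notMem_i hv1) (T.comm_i_of hv1)] at h4
        exact ⟨v, ⟨hv1, hv, by omega, by omega⟩, rfl⟩
      · right; left
        have hiv := T.notMem_i' hv2
        rw [length_conj hiv (T.not_comm_i_of hiv hj)] at h3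
        rw [moved_conj_simple] at h4
        exact ⟨v, ⟨⟨hv2, hv, by omega, h4⟩, fun h => T.notMem_j h.1 hj⟩, rfl⟩
      · right; right
        rw [length_conj (T.notMem_j_mul_i hx1) (T.not_comm_mul_i hx1),
          length_mul_of_notMem (T.notMem_i hx1)] at h3
        rw [moved_conj_simple, moved_mul_of_comm (T.notMem_i hx1) (T.comm_i_of hx1)] at h4
        exact ⟨x, ⟨⟨hx1, hx, by omega, by omega⟩, fun h => T.hkJ (h.1 hk)⟩, rfl⟩
    · exact Or.inl ⟨(Set.subset_insert_iff_of_notMem hi).mp h1, h2, h3, h4⟩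
  · rintro (h | ⟨v, ⟨h1, h2, h3, h4⟩, rfl⟩ | ⟨v, ⟨⟨h1, h2, h3, h4⟩, hn⟩, rfl⟩ |
      ⟨x, ⟨⟨h1, h2, h3, h4⟩, hn⟩, rfl⟩)
    · exact NRSet_mono (Set.subset_insert _ _) _ _ h
    · have hi := T.notMem_i h1
      have hc := T.comm_i_of h1
      refine ⟨?_, h2.comm hi hc, ?_, ?_⟩
      · rw [T.supp_mul_i h1]
        exact Set.insert_subset_insert (h1.trans (Set.subset_insert _ _))
      · rw [length_mul_of_notMem hi]; omega
      · rw [moved_mul_of_comm hi hc]; omega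
    · have hi := T.notMem_i' h1
      have hj : j ∈ supp cs v := by
        by_contra hj
        exact hn ⟨(Set.subset_insert_iff_of_notMem hj).mp h1, h2, h3, h4⟩
      have hc := T.not_comm_i_of hi hj
      refine ⟨?_, h2.conj hi hc, ?_, ?_⟩
      · rw [supp_conj hi hc]
        exact Set.insert_subset_insert h1
      · rw [length_conj hi hc]; omega
      · rw [moved_conj_simple]; exact h4
    · have hi := T.notMem_i h1
      have hc := T.comm_i_of h1
      have hj := T.notMem_j_mul_i h1
      have hc' := T.not_comm_mul_i h1
      refine ⟨?_, (h2.comm hi hc).conj hj hc', ?_, ?_⟩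
      · rw [T.supp_third h1, Set.insert_comm]
        exact Set.insert_subset_insert (Set.insert_subset_insert h1)
      · rw [length_conj hj hc', length_mul_of_notMem hi]; omega
      · rw [moved_conj_simple, moved_mul_of_comm hi hc]; omega

/-- The recursion for a tail: the parts of `NRSet_eq` are disjoint and the maps giving the shapes are
injective. -/
lemma ncard_NRSet {l a : ℕ} (hl : 3 ≤ l) (ha : 1 ≤ a) :
    ((NRSet cs (insert i (insert j (insert k J))) l a).ncard : ℤ) =
      (NRSet cs (insert j (insert k J)) l a).ncard
      + (NRSet cs (insert j (insert k J)) (l - 2) a).ncard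
      + (NRSet cs (insert k J) (l - 1) (a - 1)).ncard
      - (NRSet cs (insert k J) (l - 2) a).ncard
      + (NRSet cs (insert k J) (l - 3) (a - 1)).ncard
      - (NRSet cs J (l - 3) (a - 1)).ncard := by
  have hmem_j : ∀ v, v ∈ NRSet cs (insert j (insert k J)) (l - 2) a \
      NRSet cs (insert k J) (l - 2) a → j ∈ supp cs v := by
    intro v hv
    by_contra hj
    exact hv.2 ⟨(Set.subset_insert_iff_of_notMem hj).mp hv.1.1, hv.1.2⟩
  have hmem_k : ∀ v, v ∈ NRSet cs (insert k J) (l - 3) (a - 1) \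
      NRSet cs J (l - 3) (a - 1) → k ∈ supp cs v := by
    intro v hv
    by_contra hk
    exact hv.2 ⟨(Set.subset_insert_iff_of_notMem hk).mp hv.1.1, hv.1.2⟩
  have f1 : (NRSet cs (insert j (insert k J)) l a).Finite := finite_NRSet _ _
  have f2 : ((fun v => v * cs.simple i) '' NRSet cs (insert k J) (l - 1) (a - 1)).Finite :=
    (finite_NRSet _ _).image _
  have f3 : ((fun v => cs.simple i * v * cs.simple i) ''
      (NRSet cs (insert j (insert k J)) (l - 2) a \ NRSet cs (insert k J) (l - 2) a)).Finite :=
    ((finite_NRSet _ _).sdiff).image _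
  have f4 : ((fun x => cs.simple j * (x * cs.simple i) * cs.simple j) ''
      (NRSet cs (insert k J) (l - 3) (a - 1) \ NRSet cs J (l - 3) (a - 1))).Finite :=
    ((finite_NRSet _ _).sdiff).image _
  rw [T.NRSet_eq hl ha, Set.ncard_union_eq ?_ f1 (f2.union (f3.union f4)),
    Set.ncard_union_eq ?_ f2 (f3.union f4), Set.ncard_union_eq ?_ f3 f4,
    Set.ncard_image_of_injective _ ?_, Set.ncard_image_of_injective _ ?_,
    Set.ncard_image_of_injective _ ?_]
  · have h1 := Set.ncard_sdiff_add_ncard_of_subset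
      (NRSet_mono (cs := cs) (Set.subset_insert j (insert k J)) (l - 2) a) (finite_NRSet _ _)
    have h2 := Set.ncard_sdiff_add_ncard_of_subset
      (NRSet_mono (cs := cs) (Set.subset_insert k J) (l - 3) (a - 1)) (finite_NRSet _ _)
    omega
  · intro x y h
    simpa using h
  · intro x y h
    simpa using h
  · intro x y h
    simpa using h
  · rw [Set.disjoint_left]
    rintro _ ⟨v, hv, rfl⟩ ⟨x, hx, h⟩
    exact T.second_ne_third hv.1.1 hx.1.1 (hmem_k x hx) h.symm
  · rw [Set.disjoint_left]
    rintro _ ⟨u, hu, rfl⟩ h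
    have hju := T.notMem_j_mul_i hu.1
    rcases h with ⟨v, hv, h⟩ | ⟨x, hx, h⟩
    · have hi := T.notMem_i' hv.1.1
      have hj := hmem_j v hv
      apply hju
      simp only at h
      rw [← h, supp_conj hi (T.not_comm_i_of hi hj)]
      exact Set.mem_insert_of_mem _ hj
    · apply hju
      simp only at h
      rw [← h, T.supp_third hx.1.1]
      exact Set.mem_insert _ _
  · rw [Set.disjoint_left]
    intro w hw h
    apply T.notMem_i' hw.1
    rcases h with ⟨u, hu, rfl⟩ | ⟨v, hv, rfl⟩ | ⟨x, hx, rfl⟩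
    · simp only [T.supp_mul_i hu.1]
      exact Set.mem_insert _ _
    · have hi := T.notMem_i' hv.1.1
      simp only [supp_conj hi (T.not_comm_i_of hi (hmem_j v hv))]
      exact Set.mem_insert _ _
    · simp only [T.supp_third hx.1.1]
      exact Set.mem_insert_of_mem _ (Set.mem_insert _ _)

end Tail

/-- Distinct commuting simple reflections do not satisfy the braid relation of length three. -/
lemma not_comm_of_braid {p q : B} (hpq : p ≠ q)
    (h : cs.simple p * cs.simple q * cs.simple p = cs.simple q * cs.simple p * cs.simple q) :
    cs.simple p * cs.simple q ≠ cs.simple q * cs.simple p := by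
  intro hc
  rw [hc] at h
  simp only [mul_assoc, cs.simple_mul_simple_self, mul_one] at h
  rw [hc, cs.simple_mul_simple_cancel_left] at h
  exact hpq (simple_injective cs h).symm

lemma parabGen_eq {n : ℕ} {M : CoxeterMatrix (Fin n)} (cs : CoxeterSystem M W) (m : ℕ) :
    parabGen cs m = cs.simple '' {b : Fin n | (b : ℕ) < m} := by
  ext w
  constructor
  · rintro ⟨b, hb, rfl⟩
    exact ⟨b, hb, rfl⟩
  · rintro ⟨b, hb, rfl⟩
    exact ⟨b, hb, rfl⟩

lemma setOf_lt_succ {n m : ℕ} (hm : m < n) :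
    {b : Fin n | (b : ℕ) < m + 1} = insert ⟨m, hm⟩ {b : Fin n | (b : ℕ) < m} := by
  ext b
  simp only [Set.mem_ofPred_eq, Set.mem_insert_iff, Fin.ext_iff]
  omega

end Recursion

end BoolInv

open BoolInv in
/-- Let `(W, S)` be a Coxeter system with `S = {s₁, …, sₙ}` (here `sⱼ` is
`cs.simple ⟨j-1⟩`), `n ≥ 3`, such that `sₙ` commutes with `sᵢ` for `i ≤ n-2`,
`s_{n-1}` commutes with `sᵢ` for `i ≤ n-3`, `sₙ s_{n-1} sₙ = s_{n-1} sₙ s_{n-1}`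
and `s_{n-1} s_{n-2} s_{n-1} = s_{n-2} s_{n-1} s_{n-2}`.  Then for `l ≥ 3`, `a ≥ 1`:
`f(Wₙ,l,a) = f(W_{n-1},l,a) + f(W_{n-1},l-2,a) + f(W_{n-2},l-1,a-1) - f(W_{n-2},l-2,a)
 + f(W_{n-2},l-3,a-1) - f(W_{n-3},l-3,a-1)`. -/
theorem fCount_recursion {n : ℕ} {W : Type*} [Group W] {M : CoxeterMatrix (Fin n)}
    (cs : CoxeterSystem M W) (hn : 3 ≤ n)
    (hcomm1 : ∀ b : Fin n, (b : ℕ) + 2 < n →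
      cs.simple b * cs.simple ⟨n - 1, by omega⟩ = cs.simple ⟨n - 1, by omega⟩ * cs.simple b)
    (hcomm2 : ∀ b : Fin n, (b : ℕ) + 3 < n →
      cs.simple b * cs.simple ⟨n - 2, by omega⟩ = cs.simple ⟨n - 2, by omega⟩ * cs.simple b)
    (hbraid1 : cs.simple ⟨n - 1, by omega⟩ * cs.simple ⟨n - 2, by omega⟩ *
        cs.simple ⟨n - 1, by omega⟩ =
      cs.simple ⟨n - 2, by omega⟩ * cs.simple ⟨n - 1, by omega⟩ * cs.simple ⟨n - 2, by omega⟩)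
    (hbraid2 : cs.simple ⟨n - 2, by omega⟩ * cs.simple ⟨n - 3, by omega⟩ *
        cs.simple ⟨n - 2, by omega⟩ =
      cs.simple ⟨n - 3, by omega⟩ * cs.simple ⟨n - 2, by omega⟩ * cs.simple ⟨n - 3, by omega⟩)
    (l a : ℕ) (hl : 3 ≤ l) (ha : 1 ≤ a) :
    (fCount (parabGen cs n) l a : ℤ) =
      fCount (parabGen cs (n - 1)) l a + fCount (parabGen cs (n - 1)) (l - 2) a
      + fCount (parabGen cs (n - 2)) (l - 1) (a - 1) - fCount (parabGen cs (n - 2)) (l - 2) a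
      + fCount (parabGen cs (n - 2)) (l - 3) (a - 1)
      - fCount (parabGen cs (n - 3)) (l - 3) (a - 1) := by
  have e2 : {b : Fin n | (b : ℕ) < n - 2} =
      insert ⟨n - 3, by omega⟩ {b : Fin n | (b : ℕ) < n - 3} := by
    rw [← setOf_lt_succ]; congr! 3; omega
  have e1 : {b : Fin n | (b : ℕ) < n - 1} =
      insert ⟨n - 2, by omega⟩ {b : Fin n | (b : ℕ) < n - 2} := by
    rw [← setOf_lt_succ]; congr! 3; omega
  have e0 : {b : Fin n | (b : ℕ) < n} =
      insert ⟨n - 1, by omega⟩ {b : Fin n | (b : ℕ) < n - 1} := by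
    rw [← setOf_lt_succ]; congr! 3; omega
  have T : Tail cs {b : Fin n | (b : ℕ) < n - 3} ⟨n - 1, by omega⟩ ⟨n - 2, by omega⟩
      ⟨n - 3, by omega⟩ := by
    refine ⟨?_, ?_, ?_, ?_, ?_, ?_, ?_, ?_, hbraid1.symm⟩
    · simp only [ne_eq, Fin.ext_iff]; omega
    · rw [← e2]; simp only [Set.mem_ofPred_eq]; omega
    · rw [← e2]; simp only [Set.mem_ofPred_eq]; omega
    · simp only [Set.mem_ofPred_eq]; omega
    · rw [← e2]
      intro b hb
      simp only [Set.mem_ofPred_eq] at hb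
      exact hcomm1 b (by omega)
    · intro b hb
      simp only [Set.mem_ofPred_eq] at hb
      exact hcomm2 b (by omega)
    · exact not_comm_of_braid (by simp only [ne_eq, Fin.ext_iff]; omega) hbraid1
    · exact not_comm_of_braid (by simp only [ne_eq, Fin.ext_iff]; omega) hbraid2.symm
  have := T.ncard_NRSet hl ha
  rw [← e2, ← e1, ← e0] at this
  simpa only [parabGen_eq, fCount_eq] using this
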